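/- arXiv:1607.08137 — 2 statements merged into one kernel-verified Lean document; each statement's English description precedes it below -/
import Mathlib

section
/- Take k = 3, n = 6 and the weight vectors w¹ = (1,1,0), w² = (1,0,1), w³ = (0,1,1), w⁴ = w⁵ = (1,1,1), w⁶ = (2,2,2) in the Vandermonde-quotient construction. Then for every δ ≥ 0 the power series F_δ ∈ ℚ[[x₁,x₂,x₃]] is divisible by Δ = (x₁−x₂)(x₁−x₃)(x₂−x₃), and the resulting series I₀(q) = Σ_{δ≥0} a_δ q^δ with a_δ = (F_δ/Δ)(0) satisfies {θ⁴ − 8q(2θ+1)²(3θ²+3θ+1) + 64q²(θ+1)²(2θ+1)(2θ+3)} I₀ = 0. -/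
noncomputable section
namespace Stmt10

/-- The multivariable power series ring `ℚ[[x₁,…,x_3]]`. -/
abbrev R := MvPowerSeries (Fin 3) ℚ

/-- The constant `a` in `R`. -/
def Cc (a : ℚ) : R := MvPowerSeries.C a

/-- The pairs `i < j`. -/
def pairs : Finset (Fin 3 × Fin 3) := Finset.univ.filter fun p => p.1 < p.2

/-- The Vandermonde element `Δ = ∏_{i<j}(x_i − x_j)`. -/
def Vand : R := ∏ p ∈ pairs, (MvPowerSeries.X p.1 - MvPowerSeries.X p.2)

/-- The weight vectors. -/
def ws : List (Fin 3 → ℕ) := [![1, 1, 0], ![1, 0, 1], ![0, 1, 1], ![1, 1, 1], ![1, 1, 1], ![2, 2, 2]]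

/-- `n = 6`. -/
def n : ℕ := 6

/-- The term `T_d` of the Vandermonde-quotient construction:
`T_d = ∏_{i<j}(x_i−x_j+d_i−d_j) · ∏_s ∏_{m=1}^{⟨wˢ,d⟩}(⟨wˢ,x⟩+m) · u_d⁻¹`. -/
def T (d : Fin 3 → ℕ) : R :=
  (∏ p ∈ pairs,
      (MvPowerSeries.X p.1 - MvPowerSeries.X p.2 + Cc ((d p.1 : ℚ) - (d p.2 : ℚ)))) *
    (ws.map fun w =>
      ∏ m ∈ Finset.Icc 1 (∑ j, w j * d j),
        ((∑ j, Cc ((w j : ℚ)) * MvPowerSeries.X j) + Cc (m : ℚ))).prod *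
    (∏ j, ∏ m ∈ Finset.Icc 1 (d j), (MvPowerSeries.X j + Cc (m : ℚ)) ^ n)⁻¹

/-- `F_δ = Σ_{d₁+⋯+d_k=δ} T_d`. -/
def F (δ : ℕ) : R :=
  ∑ d ∈ (Fintype.piFinset fun _ : Fin 3 => Finset.range (δ + 1)).filter
      (fun d => ∑ j, d j = δ), T d

/-- The Euler operator `θ = q·d/dq` on `ℚ[[q]]`. -/
def th (f : PowerSeries ℚ) : PowerSeries ℚ :=
  PowerSeries.mk fun d => (d : ℚ) * PowerSeries.coeff d f

/-- `t` is a uniformizer-like element of the subring `A`: every `m + c t` with `m ≠ 0` is a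
unit of `A`, and `m + c t` vanishes only for `m = c = 0`. -/
structure IsGerm {K : Type*} [Field K] (A : Subring K) (t : K) : Prop where
  mem : t ∈ A
  ne_zero : ∀ m c : ℕ, m ≠ 0 ∨ c ≠ 0 → (m : K) + c * t ≠ 0
  inv_mem : ∀ m c : ℕ, m ≠ 0 → ((m : K) + c * t)⁻¹ ∈ A

/-- The elements of order at least `4` in `t`. -/
def fourthOrder {K : Type*} [Field K] (A : Subring K) (t : K) : Submodule A K :=
  Submodule.span A {t ^ 4}

/-- The rising product `(x + 1) ⋯ (x + m)`. -/
def rising {K : Type*} [CommRing K] (x : K) (m : ℕ) : K := ∏ k ∈ Finset.Icc 1 m, (x + k)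

/-- The point `x + d` on the line `x = (t, 2t, 3t)`. -/
def point {K : Type*} [Field K] (t : K) (d : Fin 3 → ℕ) (i : Fin 3) : K :=
  d i + ((i : ℕ) + 1 : ℕ) * t

/-- The hypergeometric weight of the bundle `Λ²S*` on `G(3,6)` at `x = (t, 2t, 3t)`. -/
def weight {K : Type*} [Field K] (t : K) (d : Fin 3 → ℕ) : K :=
  rising (3 * t) (d 0 + d 1) * rising (4 * t) (d 0 + d 2) * rising (5 * t) (d 1 + d 2) /
    (rising t (d 0) * rising (2 * t) (d 1) * rising (3 * t) (d 2)) ^ 6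

/-- The inverse of the ratio of consecutive weights in the direction `i`. -/
def invRatio {K : Type*} [Field K] (i : Fin 3) (y : Fin 3 → K) : K :=
  y i ^ 6 / ((y i + y (i + 1)) * (y i + y (i + 2)))

/-- The Vandermonde polynomial in three variables. -/
def vandermonde {K : Type*} [CommRing K] (y : Fin 3 → K) : K :=
  (y 0 - y 1) * (y 0 - y 2) * (y 1 - y 2)

/-- The sum over `|d| = m` of the function `f` at `x + d`, weighted by the Vandermonde
polynomial and the hypergeometric weight. -/
def moment {K : Type*} [Field K] (t : K) (f : (Fin 3 → K) → K) (m : ℕ) : K :=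
  ∑ d ∈ Finset.piAntidiag Finset.univ m,
    f (point t d) * vandermonde (point t d) * weight t d

section Telescoping

variable {K : Type*} [Field K] {A : Subring K} {t : K}

lemma mul_mem_fourthOrder {a z : K} (ha : a ∈ A) (hz : z ∈ fourthOrder A t) :
    a * z ∈ fourthOrder A t :=
  (fourthOrder A t).smul_mem ⟨a, ha⟩ hz

lemma pow_four_mul_mem_fourthOrder {a : K} (ha : a ∈ A) : t ^ 4 * a ∈ fourthOrder A t := by
  rw [mul_comm]
  exact mul_mem_fourthOrder ha (Submodule.mem_span_singleton_self _)

lemma rising_succ (x : K) (m : ℕ) : rising x (m + 1) = rising x m * (x + (m + 1 : ℕ)) := by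
  rw [rising, rising, Finset.prod_Icc_succ_top (by omega)]

lemma cancel_ratio (a b c : K) {e u p q : K} (he : e ≠ 0) (hu : u ≠ 0) (hp : p ≠ 0)
    (hq : q ≠ 0) : u ^ 6 / (p * q) * (a * p * (b * q) * c / (e * u) ^ 6) = a * b * c / e ^ 6 := by
  field_simp

namespace IsGerm

lemma mul_inv_mem (h : IsGerm A t) (m c : ℕ) (hc : c ≠ 0) : t * ((m : K) + c * t)⁻¹ ∈ A := by
  rcases eq_or_ne m 0 with rfl | hm
  · have ht : t ≠ 0 := by simpa using h.ne_zero 0 1 (by simp)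
    have hc' : (c : K) ≠ 0 := by simpa using h.ne_zero c 0 (by simp [hc])
    have hinv := h.inv_mem c 0 hc
    have : t * (((0 : ℕ) : K) + c * t)⁻¹ = ((c : K) + (0 : ℕ) * t)⁻¹ := by
      simp
      field_simp
    rwa [this]
  · exact A.mul_mem h.mem (h.inv_mem m c hm)

lemma point_mem (h : IsGerm A t) (d : Fin 3 → ℕ) (i : Fin 3) : point t d i ∈ A :=
  A.add_mem (natCast_mem A _) (A.mul_mem (natCast_mem A _) h.mem)

lemma point_add_point_ne_zero (h : IsGerm A t) (d : Fin 3 → ℕ) (i j : Fin 3) :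
    point t d i + point t d j ≠ 0 := by
  have := h.ne_zero (d i + d j) (i + 1 + (j + 1)) (by omega)
  push_cast at this
  simp only [point]
  push_cast
  convert this using 1
  ring

lemma rising_mem (h : IsGerm A t) (c m : ℕ) : rising ((c : K) * t) m ∈ A :=
  A.prod_mem fun _ _ => A.add_mem (A.mul_mem (natCast_mem A _) h.mem) (natCast_mem A _)

lemma rising_ne_zero (h : IsGerm A t) (c m : ℕ) : rising ((c : K) * t) m ≠ 0 := by
  refine Finset.prod_ne_zero_iff.2 fun k hk => ?_
  rw [add_comm]
  exact h.ne_zero k c (Or.inl (by have := (Finset.mem_Icc.1 hk).1; omega))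

lemma inv_rising_mem (h : IsGerm A t) (c m : ℕ) : (rising ((c : K) * t) m)⁻¹ ∈ A := by
  rw [rising, ← Finset.prod_inv_distrib]
  refine A.prod_mem fun k hk => ?_
  rw [add_comm]
  exact h.inv_mem k c (by have := (Finset.mem_Icc.1 hk).1; omega)

lemma weight_mem (h : IsGerm A t) (d : Fin 3 → ℕ) : weight t d ∈ A := by
  have hone := h.inv_rising_mem 1
  have htwo := h.inv_rising_mem 2
  have hthree := h.inv_rising_mem 3
  have hnum := h.rising_mem 3
  have hnum' := h.rising_mem 4
  have hnum'' := h.rising_mem 5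
  push_cast at hone htwo hthree hnum hnum' hnum''
  rw [one_mul] at hone
  rw [weight, div_eq_mul_inv, ← inv_pow, mul_inv, mul_inv]
  exact A.mul_mem (A.mul_mem (A.mul_mem (hnum _) (hnum' _)) (hnum'' _))
    (A.pow_mem (A.mul_mem (A.mul_mem (hone _) (htwo _)) (hthree _)) _)

lemma invRatio_mul_weight (h : IsGerm A t) (i : Fin 3) (d : Fin 3 → ℕ) :
    invRatio i (point t (d + Pi.single i 1)) * weight t (d + Pi.single i 1) = weight t d := by
  have hsum := h.point_add_point_ne_zero (d + Pi.single i 1)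
  have hone := h.rising_ne_zero 1
  have htwo := h.rising_ne_zero 2
  have hthree := h.rising_ne_zero 3
  have hn := h.ne_zero (d i + 1) (i + 1) (by omega)
  push_cast at hone htwo hthree
  rw [one_mul] at hone
  have hden := mul_ne_zero (mul_ne_zero (hone (d 0)) (htwo (d 1))) (hthree (d 2))
  have hsum₁ := hsum i (i + 1)
  have hsum₂ := hsum i (i + 2)
  fin_cases i
  · simp [point, weight, invRatio] at hsum₁ hsum₂ hn ⊢
    refine Eq.trans ?_ (cancel_ratio (rising (3 * t) (d 0 + d 1)) (rising (4 * t) (d 0 + d 2))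
      (rising (5 * t) (d 1 + d 2)) hden hn hsum₁ hsum₂)
    rw [add_right_comm (d 0) 1 (d 1), add_right_comm (d 0) 1 (d 2),
      rising_succ, rising_succ, rising_succ]
    push_cast
    ring
  · simp [point, weight, invRatio] at hsum₁ hsum₂ hn ⊢
    refine Eq.trans ?_ (cancel_ratio (rising (5 * t) (d 1 + d 2)) (rising (3 * t) (d 0 + d 1))
      (rising (4 * t) (d 0 + d 2)) hden hn hsum₁ hsum₂) |>.trans (by ring)
    rw [add_right_comm (d 1) 1 (d 2), ← add_assoc (d 0) (d 1) 1,
      rising_succ, rising_succ, rising_succ]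
    push_cast
    ring
  · simp [point, weight, invRatio] at hsum₁ hsum₂ hn ⊢
    refine Eq.trans ?_ (cancel_ratio (rising (4 * t) (d 0 + d 2)) (rising (5 * t) (d 1 + d 2))
      (rising (3 * t) (d 0 + d 1)) hden hn hsum₁ hsum₂) |>.trans (by ring)
    rw [← add_assoc (d 0) (d 2) 1, ← add_assoc (d 1) (d 2) 1,
      rising_succ, rising_succ, rising_succ]
    push_cast
    ring

lemma boundary_mem (h : IsGerm A t)
    {g : K} (hg : g ∈ A) (i : Fin 3) (d : Fin 3 → ℕ) (hd : d i = 0) :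
    invRatio i (point t d) * g * weight t d ∈ fourthOrder A t := by
  have hdiv (j : Fin 3) : t * (point t d i + point t d j)⁻¹ ∈ A := by
    convert h.mul_inv_mem (d j) (i + 1 + (j + 1)) (by omega) using 3
    simp only [point, hd]
    push_cast
    ring
  have key : invRatio i (point t d) * g * weight t d =
      t ^ 4 * ((((i : ℕ) + 1 : ℕ) : K) ^ 6 * (t * (point t d i + point t d (i + 1))⁻¹) *
        (t * (point t d i + point t d (i + 2))⁻¹) * g * weight t d) := by
    have hpt : point t d i = (((i : ℕ) + 1 : ℕ) : K) * t := by simp [point, hd]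
    rw [invRatio, div_eq_mul_inv, mul_inv]
    nth_rw 1 [hpt]
    ring
  rw [key]
  exact pow_four_mul_mem_fourthOrder (A.mul_mem (A.mul_mem (A.mul_mem (A.mul_mem
    (A.pow_mem (natCast_mem A _) _) (hdiv _)) (hdiv _)) hg) (h.weight_mem d))

lemma telescope_mem (h : IsGerm A t) (i : Fin 3) (g : (Fin 3 → K) → K)
    (hg : ∀ d, g (point t d) ∈ A) (m : ℕ) :
    ∑ d ∈ Finset.piAntidiag Finset.univ (m + 1), invRatio i (point t d) * g (point t d) * weight t d
      - ∑ d ∈ Finset.piAntidiag Finset.univ m, g (point t d + Pi.single i 1) * weight t d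
      ∈ fourthOrder A t := by
  have hshift : ∑ d ∈ Finset.piAntidiag Finset.univ m,
        g (point t d + Pi.single i 1) * weight t d =
      ∑ d ∈ (Finset.piAntidiag Finset.univ (m + 1)).filter (fun d => d i ≠ 0),
        invRatio i (point t d) * g (point t d) * weight t d := by
    refine Finset.sum_bij' (fun d _ => d + Pi.single i 1) (fun d _ => d - Pi.single i 1)
      ?_ ?_ ?_ ?_ ?_
    · intro d hd
      simp only [Finset.mem_piAntidiag, Finset.mem_filter, Pi.add_apply, Finset.sum_add_distrib,
        Pi.single_eq_same] at hd ⊢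
      simp [hd.1]
    · intro d hd
      simp only [Finset.mem_piAntidiag, Finset.mem_filter] at hd ⊢
      refine ⟨?_, by simp⟩
      have hle : Pi.single i 1 ≤ d := by
        intro j
        rcases eq_or_ne j i with rfl | hj
        · simpa using Nat.one_le_iff_ne_zero.2 hd.2
        · simp [hj]
      have := congrArg (fun e : Fin 3 → ℕ => ∑ j, e j) (tsub_add_cancel_of_le hle)
      simp only [Pi.add_apply, Finset.sum_add_distrib, hd.1.1] at this
      simpa using this
    · intro d _
      simp
    · intro d hd
      refine tsub_add_cancel_of_le fun j => ?_
      rcases eq_or_ne j i with rfl | hj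
      · simpa using Nat.one_le_iff_ne_zero.2 (Finset.mem_filter.1 hd).2
      · simp [hj]
    · intro d _
      have hpt : point t (d + Pi.single i 1) = point t d + Pi.single i 1 := by
        funext j
        rcases eq_or_ne j i with rfl | hj
        · simp [point]
          ring
        · simp [point, hj]
      rw [mul_right_comm, h.invRatio_mul_weight, hpt, mul_comm]
  rw [hshift, ← Finset.sum_filter_add_sum_filter_not _ (fun d : Fin 3 → ℕ => d i ≠ 0),
    add_sub_cancel_left]
  refine Submodule.sum_mem _ fun d hd => h.boundary_mem (hg d) i d ?_
  simpa using (Finset.mem_filter.1 hd).2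

/-- A relation between consecutive moments, obtained by telescoping in the three directions. -/
lemma moment_sub_mem (h : IsGerm A t) (P Q : (Fin 3 → K) → K) (g : Fin 3 → (Fin 3 → K) → K)
    (hg : ∀ i y, (∀ j, y j ∈ A) → g i y ∈ A)
    (hP : ∀ y : Fin 3 → K, (∀ i j, y i + y j ≠ 0) →
      P y * vandermonde y = ∑ i, invRatio i y * g i y)
    (hQ : ∀ y : Fin 3 → K, Q y * vandermonde y = ∑ i, g i (y + Pi.single i 1))
    (m : ℕ) : moment t P (m + 1) - moment t Q m ∈ fourthOrder A t := by
  have hleft : moment t P (m + 1) = ∑ i : Fin 3, ∑ d ∈ Finset.piAntidiag Finset.univ (m + 1),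
      invRatio i (point t d) * g i (point t d) * weight t d := by
    rw [Finset.sum_comm]
    refine Finset.sum_congr rfl fun d _ => ?_
    rw [hP _ (h.point_add_point_ne_zero d), Finset.sum_mul]
  have hright : moment t Q m = ∑ i : Fin 3, ∑ d ∈ Finset.piAntidiag Finset.univ m,
      g i (point t d + Pi.single i 1) * weight t d := by
    rw [Finset.sum_comm]
    refine Finset.sum_congr rfl fun d _ => ?_
    rw [hQ, Finset.sum_mul]
  rw [hleft, hright, ← Finset.sum_sub_distrib]
  exact Submodule.sum_mem _ fun i _ =>
    h.telescope_mem i (g i) (fun d => hg i _ (h.point_mem d)) m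

/-- The relations coming from an antisymmetric kernel `(a - b) q(a, b)`. -/
lemma moment_sub_mem_of_kernel (h : IsGerm A t) (P Q f : (Fin 3 → K) → K) (q : K → K → K)
    (hq : ∀ a ∈ A, ∀ b ∈ A, q a b ∈ A) (hf : ∀ y, (∀ j, y j ∈ A) → f y ∈ A)
    (hP : ∀ y : Fin 3 → K, (∀ i j, y i + y j ≠ 0) → P y * vandermonde y =
      f y * (y 0 ^ 6 / ((y 0 + y 1) * (y 0 + y 2)) * ((y 1 - y 2) * q (y 1) (y 2)) +
        y 1 ^ 6 / ((y 1 + y 2) * (y 1 + y 0)) * ((y 2 - y 0) * q (y 2) (y 0)) +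
        y 2 ^ 6 / ((y 2 + y 0) * (y 2 + y 1)) * ((y 0 - y 1) * q (y 0) (y 1))))
    (hQ : ∀ a b c : K, Q ![a, b, c] * vandermonde ![a, b, c] =
      (b - c) * q b c * f ![a + 1, b, c] + (c - a) * q c a * f ![a, b + 1, c] +
        (a - b) * q a b * f ![a, b, c + 1])
    (m : ℕ) : moment t P (m + 1) - moment t Q m ∈ fourthOrder A t := by
  refine h.moment_sub_mem P Q
    (fun i y => (y (i + 1) - y (i + 2)) * q (y (i + 1)) (y (i + 2)) * f y) ?_ ?_ ?_ m
  · intro i y hy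
    exact A.mul_mem (A.mul_mem (A.sub_mem (hy _) (hy _)) (hq _ (hy _) _ (hy _))) (hf y hy)
  · intro y hy
    rw [hP y hy]
    simp [Fin.sum_univ_three, invRatio]
    ring
  · intro y
    have hy : y = ![y 0, y 1, y 2] := by ext j; fin_cases j <;> rfl
    have h0 : y + Pi.single 0 1 = ![y 0 + 1, y 1, y 2] := by ext j; fin_cases j <;> simp
    have h1 : y + Pi.single 1 1 = ![y 0, y 1 + 1, y 2] := by ext j; fin_cases j <;> simp
    have h2 : y + Pi.single 2 1 = ![y 0, y 1, y 2 + 1] := by ext j; fin_cases j <;> simp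
    have := hQ (y 0) (y 1) (y 2)
    rw [← hy] at this
    rw [this]
    simp [Fin.sum_univ_three, h0, h1, h2]

end IsGerm
end Telescoping

section Recurrence

variable {K : Type*} [Field K] {A : Subring K} {t : K}

/-- The second elementary symmetric polynomial. -/
def e₂ (y : Fin 3 → K) : K := y 0 * y 1 + y 0 * y 2 + y 1 * y 2

/-- The third elementary symmetric polynomial. -/
def e₃ (y : Fin 3 → K) : K := y 0 * y 1 * y 2

lemma moment_congr_of_sum {m : ℕ} {f g : (Fin 3 → K) → K}
    (hfg : ∀ y : Fin 3 → K, y 0 + y 1 + y 2 = m + 6 * t → f y = g y) :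
    moment t f m = moment t g m := by
  refine Finset.sum_congr rfl fun d hd => ?_
  rw [hfg]
  have hsum := (Finset.mem_piAntidiag.1 hd).1
  simp only [Fin.sum_univ_three] at hsum
  simp [point, ← hsum]
  ring

lemma moment_sub (f g : (Fin 3 → K) → K) (m : ℕ) :
    moment t (fun y => f y - g y) m = moment t f m - moment t g m := by
  simp [moment, sub_mul, Finset.sum_sub_distrib]

lemma moment_add (f g : (Fin 3 → K) → K) (m : ℕ) :
    moment t (fun y => f y + g y) m = moment t f m + moment t g m := by
  simp [moment, add_mul, Finset.sum_add_distrib]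

lemma moment_const_mul (c : K) (f : (Fin 3 → K) → K) (m : ℕ) :
    moment t (fun y => c * f y) m = c * moment t f m := by
  simp [moment, mul_assoc, Finset.mul_sum]

lemma e₂_mem (y : Fin 3 → K) (hy : ∀ j, y j ∈ A) : e₂ y ∈ A :=
  A.add_mem (A.add_mem (A.mul_mem (hy _) (hy _)) (A.mul_mem (hy _) (hy _)))
    (A.mul_mem (hy _) (hy _))

lemma e₃_mem (y : Fin 3 → K) (hy : ∀ j, y j ∈ A) : e₃ y ∈ A :=
  A.mul_mem (A.mul_mem (hy _) (hy _)) (hy _)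

lemma moment_zero_mem (f : (Fin 3 → K) → K) {a : K} (ha : a ∈ A)
    (hf : f ![t, 2 * t, 3 * t] = t * a) : moment t f 0 ∈ fourthOrder A t := by
  have hpt : point t 0 = ![t, 2 * t, 3 * t] := by
    ext j
    fin_cases j <;> simp [point]
  have hval : moment t f 0 = t ^ 4 * (-2 * a) := by
    simp [moment, hpt, hf, vandermonde, weight, rising]
    ring
  rw [hval]
  exact pow_four_mul_mem_fourthOrder (A.mul_mem (A.neg_mem (ofNat_mem A 2)) ha)

namespace IsGerm

/-- The relation `p₂ = 0`, twisted by a symmetric function `f`. -/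
lemma powerSum_relation (h : IsGerm A t)
    (f Q : (Fin 3 → K) → K) (hf : ∀ y, (∀ j, y j ∈ A) → f y ∈ A)
    (hQ : ∀ a b c : K, Q ![a, b, c] * vandermonde ![a, b, c] =
      (b - c) * f ![a + 1, b, c] + (c - a) * f ![a, b + 1, c] + (a - b) * f ![a, b, c + 1])
    (m : ℕ) :
    (((m + 1 : ℕ) : K) + 6 * t) ^ 2 * moment t f (m + 1) - 2 * moment t (fun y => e₂ y * f y) (m + 1)
      - moment t Q m ∈ fourthOrder A t := by
  convert h.moment_sub_mem_of_kernel (fun y => (y 0 ^ 2 + y 1 ^ 2 + y 2 ^ 2) * f y) Q f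
    (fun _ _ => 1) (fun _ _ _ _ => A.one_mem) hf ?_ (by simpa using hQ) m using 2
  · rw [← moment_const_mul, ← moment_const_mul, ← moment_sub]
    refine moment_congr_of_sum fun y hy => ?_
    rw [← hy, e₂]
    ring
  · intro y hy
    have h01 := hy 0 1
    have h02 := hy 0 2
    have h12 := hy 1 2
    rw [add_comm (y 1) (y 0), add_comm (y 2) (y 0), add_comm (y 2) (y 1), vandermonde]
    field_simp
    ring

/-- The relation `e₂² - 2 e₁ e₃ = 0`, twisted by a symmetric function `f`. -/
lemma e₂_sq_relation (h : IsGerm A t) (f Q : (Fin 3 → K) → K) (hf : ∀ y, (∀ j, y j ∈ A) → f y ∈ A)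
    (hQ : ∀ a b c : K, Q ![a, b, c] * vandermonde ![a, b, c] =
      (b - c) * (b ^ 2 + c ^ 2) * f ![a + 1, b, c] + (c - a) * (c ^ 2 + a ^ 2) * f ![a, b + 1, c] +
        (a - b) * (a ^ 2 + b ^ 2) * f ![a, b, c + 1])
    (m : ℕ) :
    moment t (fun y => e₂ y * (e₂ y * f y)) (m + 1)
      - 2 * (((m + 1 : ℕ) : K) + 6 * t) * moment t (fun y => e₃ y * f y) (m + 1)
      - moment t Q m ∈ fourthOrder A t := by
  convert h.moment_sub_mem_of_kernel
    (fun y => (e₂ y ^ 2 - 2 * (y 0 + y 1 + y 2) * e₃ y) * f y) Q f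
    (fun a b => a ^ 2 + b ^ 2)
    (fun _ ha _ hb => A.add_mem (A.pow_mem ha _) (A.pow_mem hb _)) hf ?_ hQ m using 2
  · rw [← moment_const_mul, ← moment_sub]
    refine moment_congr_of_sum fun y hy => ?_
    rw [← hy]
    ring
  · intro y hy
    have h01 := hy 0 1
    have h02 := hy 0 2
    have h12 := hy 1 2
    rw [add_comm (y 1) (y 0), add_comm (y 2) (y 0), add_comm (y 2) (y 1), vandermonde, e₂, e₃]
    field_simp
    ring

/-- The quantum relation for `e₃²`. -/
lemma e₃_sq_relation (h : IsGerm A t) (m : ℕ) :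
    moment t (fun y => e₃ y * e₃ y) (m + 1) - moment t e₂ m ∈ fourthOrder A t := by
  refine h.moment_sub_mem_of_kernel _ _ (fun _ => 1) (fun a b => a ^ 2 * b ^ 2)
    (fun _ ha _ hb => A.mul_mem (A.pow_mem ha _) (A.pow_mem hb _)) (fun _ _ => A.one_mem)
    ?_ ?_ m
  · intro y hy
    have h01 := hy 0 1
    have h02 := hy 0 2
    have h12 := hy 1 2
    rw [add_comm (y 1) (y 0), add_comm (y 2) (y 0), add_comm (y 2) (y 1), vandermonde, e₃]
    field_simp
    ring
  · intro a b c
    simp [vandermonde, e₂]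
    ring

lemma sq_moment_one_sub (h : IsGerm A t) (m : ℕ) :
    ((m : K) + 6 * t) ^ 2 * moment t (fun _ => 1) m - 2 * moment t e₂ m ∈ fourthOrder A t := by
  cases m with
  | zero =>
    rw [← moment_const_mul, ← moment_const_mul, ← moment_sub]
    refine moment_zero_mem (a := 14 * t) _ (A.mul_mem (ofNat_mem A 14) h.mem) ?_
    simp [e₂]
    ring
  | succ m =>
    have hrel := h.powerSum_relation (fun _ => 1) (fun _ => 0) (fun _ _ => A.one_mem)
      (fun a b c => by ring) m
    have hzero : moment t (fun _ => 0) m = 0 := by simp [moment]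
    simpa only [mul_one, hzero, sub_zero] using hrel

/-- The moment of `e₃` in terms of the moments of `1`. -/
lemma moment_e₃_relation (h : IsGerm A t) (m : ℕ) :
    8 * (((m + 1 : ℕ) : K) + 6 * t) * moment t e₃ (m + 1)
      - (((m + 1 : ℕ) : K) + 6 * t) ^ 4 * moment t (fun _ => 1) (m + 1)
      - 4 * moment t (fun _ => 1) m ∈ fourthOrder A t := by
  have hs : ((m + 1 : ℕ) : K) + 6 * t ∈ A :=
    A.add_mem (natCast_mem A _) (A.mul_mem (ofNat_mem A 6) h.mem)
  have hone := h.sq_moment_one_sub (m + 1)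
  have he₂ := h.powerSum_relation e₂ (fun _ => 0) e₂_mem
    (fun a b c => by simp [e₂]; ring) m
  have hsq := h.e₂_sq_relation (fun _ => 1) (fun _ => -1 * 1) (fun _ _ => A.one_mem)
    (fun a b c => by simp [vandermonde]; ring) m
  have hzero : moment t (fun _ => 0) m = 0 := by simp [moment]
  rw [hzero] at he₂
  rw [moment_const_mul] at hsq
  simp only [mul_one] at hsq
  generalize ((m + 1 : ℕ) : K) + 6 * t = s at *
  convert (fourthOrder A t).sub_mem ((fourthOrder A t).sub_mem
    (mul_mem_fourthOrder (A.neg_mem (ofNat_mem A 4)) hsq)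
    (mul_mem_fourthOrder (ofNat_mem A 2) he₂)) (mul_mem_fourthOrder (A.pow_mem hs 2) hone) using 1
  ring

/-- The recurrence of the moments of `1` and `e₃`. -/
lemma moment_one_relation (h : IsGerm A t) (m : ℕ) (s s' : K) (hs : s = ((m + 1 : ℕ) : K) + 6 * t)
    (hs' : s' = (m : K) + 6 * t) :
    s ^ 8 * moment t (fun _ => 1) (m + 1)
      + 4 * (s ^ 4 - 2 * s ^ 3 - 2 * s * (s' ^ 2 + 2 * s') - 8 * s ^ 2 * s' ^ 2)
        * moment t (fun _ => 1) m
      + 32 * s * moment t e₃ m ∈ fourthOrder A t := by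
  have hsA : s ∈ A := hs ▸ A.add_mem (natCast_mem A _) (A.mul_mem (ofNat_mem A 6) h.mem)
  have hprev := h.sq_moment_one_sub m
  have hII := h.moment_e₃_relation m
  have he₃ := h.powerSum_relation e₃ (fun _ => 1) e₃_mem
    (fun a b c => by simp [e₃, vandermonde]; ring) m
  have he₂₃ := h.powerSum_relation (fun y => e₂ y * e₃ y) (fun y => e₂ y + (y 0 + y 1 + y 2) * 1)
    (fun y hy => A.mul_mem (e₂_mem y hy) (e₃_mem y hy))
    (fun a b c => by simp [e₂, e₃, vandermonde]; ring) m
  have hsq := h.e₂_sq_relation e₃ (fun y => ((y 0 + y 1 + y 2) ^ 2 * 1 - 2 * e₂ y) - e₃ y) e₃_mem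
    (fun a b c => by simp [e₂, e₃, vandermonde]; ring) m
  have he₃sq := h.e₃_sq_relation m
  rw [moment_add, moment_congr_of_sum (f := fun y => (y 0 + y 1 + y 2) * 1)
    (g := fun _ => s' * 1) (fun y hy => by rw [hy, hs']), moment_const_mul] at he₂₃
  rw [moment_sub, moment_sub, moment_const_mul, moment_congr_of_sum
    (f := fun y => (y 0 + y 1 + y 2) ^ 2 * 1) (g := fun _ => s' ^ 2 * 1)
    (fun y hy => by rw [hy, hs']), moment_const_mul] at hsq
  rw [← hs'] at hprev
  rw [← hs] at hII he₃ he₂₃ hsq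
  have hsum := (fourthOrder A t).add_mem ((fourthOrder A t).add_mem ((fourthOrder A t).add_mem
    (mul_mem_fourthOrder (A.mul_mem (ofNat_mem A 32) hsA) hsq)
    (mul_mem_fourthOrder (A.mul_mem (ofNat_mem A 16) hsA) he₂₃))
    (mul_mem_fourthOrder (A.mul_mem (ofNat_mem A 8) (A.pow_mem hsA 3)) he₃))
    (mul_mem_fourthOrder (A.mul_mem (ofNat_mem A 64) (A.pow_mem hsA 2)) he₃sq)
  have hrest := (fourthOrder A t).add_mem
    (mul_mem_fourthOrder (A.pow_mem hsA 4) hII)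
    (mul_mem_fourthOrder (A.sub_mem (A.add_mem (A.mul_mem (ofNat_mem A 32) (A.pow_mem hsA 2))
      (A.mul_mem (ofNat_mem A 8) hsA)) (A.mul_mem (ofNat_mem A 32) hsA)) hprev)
  convert (fourthOrder A t).sub_mem hsum hrest using 1
  ring

end IsGerm
end Recurrence

section Divisibility

/-- The numerator of `T d`, evaluated at a point of a commutative ring. -/
def numer {B : Type*} [CommRing B] (x : Fin 3 → B) (d : Fin 3 → ℕ) : B :=
  vandermonde (fun i => x i + d i) *
    (rising (x 0 + x 1) (d 0 + d 1) * rising (x 0 + x 2) (d 0 + d 2) *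
      rising (x 1 + x 2) (d 1 + d 2)) *
    (rising (x 0 + x 1 + x 2) (d 0 + d 1 + d 2) ^ 2 *
      rising (2 * (x 0 + x 1 + x 2)) (2 * (d 0 + d 1 + d 2)))

/-- The sixth root of the denominator of `T d`. -/
def denom {B : Type*} [CommRing B] (x : Fin 3 → B) (d : Fin 3 → ℕ) : B :=
  rising (x 0) (d 0) * rising (x 1) (d 1) * rising (x 2) (d 2)

/-- The complement of `denom x d` in `denom x (fun _ => δ)`. -/
def codenom {B : Type*} [CommRing B] (δ : ℕ) (x : Fin 3 → B) (d : Fin 3 → ℕ) : B :=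
  ∏ i, ∏ k ∈ Finset.Ioc (d i) δ, (x i + k)

lemma map_rising {B C : Type*} [CommRing B] [CommRing C] (f : B →+* C) (x : B) (m : ℕ) :
    f (rising x m) = rising (f x) m := by
  simp [rising]

lemma map_vandermonde {B C : Type*} [CommRing B] [CommRing C] (f : B →+* C) (x : Fin 3 → B) :
    f (vandermonde x) = vandermonde fun i => f (x i) := by
  simp [vandermonde]

lemma map_numer {B C : Type*} [CommRing B] [CommRing C] (f : B →+* C) (x : Fin 3 → B)
    (d : Fin 3 → ℕ) : f (numer x d) = numer (fun i => f (x i)) d := by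
  simp [numer, map_vandermonde, map_rising, map_ofNat]

lemma map_denom {B C : Type*} [CommRing B] [CommRing C] (f : B →+* C) (x : Fin 3 → B)
    (d : Fin 3 → ℕ) : f (denom x d) = denom (fun i => f (x i)) d := by
  simp [denom, map_rising]

lemma map_codenom {B C : Type*} [CommRing B] [CommRing C] (f : B →+* C) (δ : ℕ) (x : Fin 3 → B)
    (d : Fin 3 → ℕ) : f (codenom δ x d) = codenom δ (fun i => f (x i)) d := by
  simp [codenom]

lemma denom_mul_codenom {B : Type*} [CommRing B] {δ : ℕ} (x : Fin 3 → B) {d : Fin 3 → ℕ}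
    (hd : ∀ i, d i ≤ δ) : denom x d * codenom δ x d = denom x fun _ => δ := by
  have hsplit (i : Fin 3) :
      rising (x i) (d i) * ∏ k ∈ Finset.Ioc (d i) δ, (x i + k) = rising (x i) δ := by
    have hIcc (m : ℕ) : Finset.Icc 1 m = Finset.Ioc 0 m := by
      ext k
      simp only [Finset.mem_Icc, Finset.mem_Ioc]
      omega
    rw [rising, rising, hIcc, hIcc,
      Finset.prod_Ioc_consecutive (fun k : ℕ => x i + (k : B)) (Nat.zero_le _) (hd i)]
  simp only [denom, codenom, Fin.prod_univ_three, ← hsplit]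
  ring

lemma numer_comp_swap {B : Type*} [CommRing B] (x : Fin 3 → B) (d : Fin 3 → ℕ) {i j : Fin 3}
    (hij : i ≠ j) (hx : x i = x j) : numer x (d ∘ Equiv.swap i j) = -numer x d := by
  have h02 : Equiv.swap (0 : Fin 3) 2 1 = 1 := by decide
  have h01 : Equiv.swap (0 : Fin 3) 1 2 = 2 := by decide
  have h12 : Equiv.swap (1 : Fin 3) 2 0 = 0 := by decide
  wlog hlt : i < j generalizing i j
  · rw [Equiv.swap_comm]
    exact this hij.symm hx.symm (lt_of_le_of_ne (not_lt.1 hlt) hij.symm)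
  fin_cases i <;> fin_cases j <;> simp at hlt hx
  · simp only [numer, vandermonde, Function.comp, Fin.zero_eta, Fin.mk_one, Equiv.swap_apply_left,
      Equiv.swap_apply_right, h01, hx, add_comm (d 1) (d 0)]
    ring
  · simp only [numer, vandermonde, Function.comp, Fin.zero_eta, Fin.reduceFinMk,
      Equiv.swap_apply_left, Equiv.swap_apply_right, h02, hx, add_comm (d 2) (d 1),
      add_comm (d 2) (d 0), add_comm (d 1) (d 0),
      show d 1 + d 2 + d 0 = d 0 + d 1 + d 2 by omega, add_comm (x 1) (x 2)]
    ring
  · simp only [numer, vandermonde, Function.comp, Fin.mk_one, Fin.reduceFinMk,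
      Equiv.swap_apply_left, Equiv.swap_apply_right, h12, hx, add_comm (d 2) (d 1),
      add_right_comm (d 0) (d 2) (d 1)]
    ring

lemma codenom_comp_swap {B : Type*} [CommRing B] (δ : ℕ) (x : Fin 3 → B) (d : Fin 3 → ℕ)
    {i j : Fin 3} (hx : x i = x j) : codenom δ x (d ∘ Equiv.swap i j) = codenom δ x d := by
  have hx' (k : Fin 3) : x (Equiv.swap i j k) = x k := by
    rw [Equiv.swap_apply_def]
    split_ifs with h1 h2
    · rw [h1, hx]
    · rw [h2, hx]
    · rfl
  rw [codenom, codenom, ← Equiv.prod_comp (Equiv.swap i j)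
    (fun k => ∏ l ∈ Finset.Ioc (d k) δ, (x k + (l : B)))]
  simp [hx']

/-- `F δ` with denominators cleared, evaluated at a point of a commutative ring. -/
def cleared {B : Type*} [CommRing B] (δ : ℕ) (x : Fin 3 → B) : B :=
  ∑ d ∈ Finset.piAntidiag Finset.univ δ, numer x d * codenom δ x d ^ 6

lemma map_cleared {B C : Type*} [CommRing B] [CommRing C] (f : B →+* C) (δ : ℕ) (x : Fin 3 → B) :
    f (cleared δ x) = cleared δ fun i => f (x i) := by
  simp [cleared, map_numer, map_codenom]

lemma cleared_eq_zero {B : Type*} [CommRing B] [IsDomain B] [CharZero B] (δ : ℕ) (x : Fin 3 → B)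
    {i j : Fin 3} (hij : i ≠ j) (hx : x i = x j) : cleared δ x = 0 := by
  have hneg : cleared δ x = -cleared δ x := by
    rw [cleared, ← Finset.sum_neg_distrib]
    refine Finset.sum_nbij' (· ∘ Equiv.swap i j) (· ∘ Equiv.swap i j) ?_ ?_ ?_ ?_ ?_
    · intro d hd
      simpa [Equiv.sum_comp (Equiv.swap i j) d] using hd
    · intro d hd
      simpa [Equiv.sum_comp (Equiv.swap i j) d] using hd
    · intro d _
      ext k
      simp
    · intro d _
      ext k
      simp
    · intro d _
      rw [numer_comp_swap x d hij hx, codenom_comp_swap δ x d hx]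
      ring
  exact self_eq_neg.1 hneg

lemma X_sub_X_dvd_of_aeval_update_eq_zero {σ A : Type*} [DecidableEq σ] [CommRing A] {i j : σ}
    {p : MvPolynomial σ A}
    (hp : MvPolynomial.aeval (Function.update MvPolynomial.X i (MvPolynomial.X j)) p =
      (0 : MvPolynomial σ A)) :
    MvPolynomial.X i - MvPolynomial.X j ∣ p := by
  set I := Ideal.span {(MvPolynomial.X i - MvPolynomial.X j : MvPolynomial σ A)}
  have hcomp : ((Ideal.Quotient.mkₐ A I).comp
      (MvPolynomial.aeval (Function.update MvPolynomial.X i (MvPolynomial.X j)))) =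
      Ideal.Quotient.mkₐ A I := by
    ext k
    rcases eq_or_ne k i with rfl | hk
    · have : (MvPolynomial.X k - MvPolynomial.X j : MvPolynomial σ A) ∈ I :=
        Ideal.subset_span rfl
      simpa using (Ideal.Quotient.eq.2 this).symm
    · simp [hk]
  rw [← Ideal.mem_span_singleton, ← Ideal.Quotient.eq_zero_iff_mem,
    ← Ideal.Quotient.mkₐ_eq_mk A, ← hcomp, AlgHom.comp_apply, hp, map_zero]

lemma vandermonde_dvd_cleared (δ : ℕ) :
    vandermonde (MvPolynomial.X : Fin 3 → MvPolynomial (Fin 3) ℚ) ∣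
      cleared δ MvPolynomial.X := by
  have hne {i j : Fin 3} (hij : i ≠ j) :
      (MvPolynomial.X i - MvPolynomial.X j : MvPolynomial (Fin 3) ℚ) ≠ 0 :=
    sub_ne_zero.2 fun h => hij (MvPolynomial.X_injective h)
  have hsub {i j : Fin 3} (hij : i ≠ j) :
      MvPolynomial.aeval (Function.update MvPolynomial.X i (MvPolynomial.X j))
        (cleared δ (MvPolynomial.X : Fin 3 → MvPolynomial (Fin 3) ℚ)) =
        (0 : MvPolynomial (Fin 3) ℚ) := by
    rw [← AlgHom.coe_toRingHom, map_cleared]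
    exact cleared_eq_zero δ _ hij (by simp [hij.symm])
  obtain ⟨q, hq⟩ := X_sub_X_dvd_of_aeval_update_eq_zero (hsub (i := 0) (j := 1) (by decide))
  have hq' := hsub (i := 0) (j := 2) (by decide)
  rw [hq, map_mul] at hq'
  obtain ⟨r, rfl⟩ := X_sub_X_dvd_of_aeval_update_eq_zero ((mul_eq_zero.1 hq').resolve_left
    (by simpa using hne (i := 2) (j := 1) (by decide)))
  have hr := hsub (i := 1) (j := 2) (by decide)
  rw [hq, map_mul, map_mul] at hr
  obtain ⟨s, rfl⟩ := X_sub_X_dvd_of_aeval_update_eq_zero (((mul_eq_zero.1 hr).resolve_left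
    (by simpa using hne (i := 0) (j := 2) (by decide)) |> mul_eq_zero.1).resolve_left
    (by simpa using hne (i := 0) (j := 2) (by decide)))
  exact ⟨s, by rw [hq, vandermonde]; ring⟩

lemma pairs_eq : pairs = {(0, 1), (0, 2), (1, 2)} := by decide

lemma Vand_eq : Vand = vandermonde MvPowerSeries.X := by
  simp [Vand, vandermonde, pairs_eq, mul_assoc]

lemma constantCoeff_denom_ne_zero (d : Fin 3 → ℕ) :
    MvPowerSeries.constantCoeff (denom (MvPowerSeries.X : Fin 3 → R) d ^ 6) ≠ 0 := by
  simp only [map_pow, map_denom, MvPowerSeries.constantCoeff_X]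
  simp [denom, rising, Finset.prod_eq_zero_iff]

lemma T_mul_denom (d : Fin 3 → ℕ) :
    T d * denom MvPowerSeries.X d ^ 6 = numer MvPowerSeries.X d := by
  have hden : (∏ j, ∏ m ∈ Finset.Icc 1 (d j), (MvPowerSeries.X j + Cc (m : ℚ)) ^ n : R) =
      denom MvPowerSeries.X d ^ 6 := by
    simp [n, Cc, denom, rising, Fin.prod_univ_three, Finset.prod_pow, mul_pow]
  rw [T, hden, mul_assoc, MvPowerSeries.inv_mul_cancel _ (constantCoeff_denom_ne_zero d), mul_one]
  simp [ws, Cc, Fin.sum_univ_three, pairs_eq, numer, vandermonde, rising]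
  rw [show 2 * d 0 + 2 * d 1 + 2 * d 2 = 2 * (d 0 + d 1 + d 2) by ring,
    ← mul_add, ← mul_add]
  ring

lemma F_eq_sum (δ : ℕ) : F δ = ∑ d ∈ Finset.piAntidiag Finset.univ δ, T d := by
  rw [F]
  congr 1
  ext d
  simp only [Finset.mem_filter, Fintype.mem_piFinset, Finset.mem_range, Finset.mem_piAntidiag,
    Finset.mem_univ, implies_true, and_true, and_iff_right_iff_imp]
  rintro rfl i
  exact Nat.lt_succ_of_le (Finset.single_le_sum (fun _ _ => Nat.zero_le _) (Finset.mem_univ i))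

lemma F_mul_denom (δ : ℕ) :
    F δ * denom MvPowerSeries.X (fun _ => δ) ^ 6 = cleared δ MvPowerSeries.X := by
  rw [F_eq_sum, Finset.sum_mul]
  refine Finset.sum_congr rfl fun d hd => ?_
  have hle (i : Fin 3) : d i ≤ δ := by
    rw [← (Finset.mem_piAntidiag.1 hd).1]
    exact Finset.single_le_sum (fun _ _ => Nat.zero_le _) (Finset.mem_univ i)
  rw [← denom_mul_codenom _ hle, mul_pow, ← mul_assoc, T_mul_denom]

lemma Vand_dvd_F (δ : ℕ) : Vand ∣ F δ := by
  obtain ⟨s, hs⟩ := vandermonde_dvd_cleared δ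
  have hcoe := congrArg (MvPolynomial.coeToMvPowerSeries.ringHom (R := ℚ)) hs
  rw [map_cleared] at hcoe
  refine ⟨(s : R) * (denom MvPowerSeries.X (fun _ => δ) ^ 6)⁻¹, ?_⟩
  rw [← mul_assoc, MvPowerSeries.eq_mul_inv_iff_mul_eq (constantCoeff_denom_ne_zero _),
    F_mul_denom, Vand_eq]
  rw [map_mul, map_vandermonde] at hcoe
  simpa using hcoe

end Divisibility

section Specialization

/-- Restriction of power series in three variables to the line `x = (t, 2t, 3t)`. -/
def restrictLine : R →+* PowerSeries ℚ :=
  (MvPowerSeries.substAlgHom (R := ℚ) (MvPowerSeries.hasSubst_of_constantCoeff_zero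
    (a := fun i : Fin 3 => (((i : ℕ) + 1 : ℕ) : PowerSeries ℚ) * PowerSeries.X)
    (fun i => by
      change PowerSeries.constantCoeff _ = 0
      simp))).toRingHom

lemma restrictLine_X (i : Fin 3) :
    restrictLine (MvPowerSeries.X i) = (((i : ℕ) + 1 : ℕ) : PowerSeries ℚ) * PowerSeries.X :=
  MvPowerSeries.substAlgHom_X _ i

lemma constantCoeff_restrictLine (G : R) :
    PowerSeries.constantCoeff (restrictLine G) = MvPowerSeries.constantCoeff G := by
  have hsub : PowerSeries.constantCoeff
      (restrictLine (G - MvPowerSeries.C (MvPowerSeries.constantCoeff G))) = 0 := by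
    have := MvPowerSeries.constantCoeff_subst_eq_zero (MvPowerSeries.hasSubst_of_constantCoeff_zero
      (a := fun i : Fin 3 => (((i : ℕ) + 1 : ℕ) : PowerSeries ℚ) * PowerSeries.X)
      (fun i => by
        change PowerSeries.constantCoeff _ = 0
        simp)) (fun i => by
        change PowerSeries.constantCoeff _ = 0
        simp) (f := G - MvPowerSeries.C (MvPowerSeries.constantCoeff G)) (by simp)
    rw [← MvPowerSeries.substAlgHom_apply] at this
    exact this
  have hC (a : ℚ) : restrictLine (MvPowerSeries.C a) = PowerSeries.C a :=
    (MvPowerSeries.substAlgHom _).commutes a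
  rw [map_sub, map_sub, hC, PowerSeries.constantCoeff_C, sub_eq_zero] at hsub
  exact hsub

/-- The field of fractions of `ℚ⟦t⟧`. -/
abbrev L := FractionRing (PowerSeries ℚ)

/-- The embedding of `ℚ⟦t⟧` into its field of fractions. -/
abbrev incl : PowerSeries ℚ →+* L := algebraMap (PowerSeries ℚ) L

lemma incl_injective : Function.Injective incl := IsFractionRing.injective (PowerSeries ℚ) L

lemma isGerm_X : IsGerm incl.range (incl PowerSeries.X) where
  mem := ⟨_, rfl⟩
  ne_zero m c hmc := by
    have hcast : ((m : L) + c * incl PowerSeries.X) =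
        incl (PowerSeries.C (m : ℚ) + PowerSeries.C (c : ℚ) * PowerSeries.X) := by simp
    rw [hcast, ne_eq, map_eq_zero_iff _ incl_injective]
    intro hzero
    have h0 := congrArg (PowerSeries.coeff 0) hzero
    have h1 := congrArg (PowerSeries.coeff 1) hzero
    simp at h0
    simp [h0] at h1
    omega
  inv_mem m c hm := by
    set f : PowerSeries ℚ := PowerSeries.C (m : ℚ) + PowerSeries.C (c : ℚ) * PowerSeries.X
    have hcast : ((m : L) + c * incl PowerSeries.X) = incl f := by simp [f]
    have hf : f * f⁻¹ = 1 := PowerSeries.mul_inv_cancel f (by simpa [f] using hm)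
    refine ⟨f⁻¹, ?_⟩
    rw [hcast]
    exact eq_inv_of_mul_eq_one_right (by rw [← map_mul, hf, map_one])

lemma constantCoeff_eq_zero_of_mem {w : PowerSeries ℚ}
    (hw : incl (PowerSeries.X ^ 3 * w) ∈ fourthOrder incl.range (incl PowerSeries.X)) :
    PowerSeries.constantCoeff w = 0 := by
  obtain ⟨⟨_, f, rfl⟩, hf⟩ := Submodule.mem_span_singleton.1 hw
  have hf' : incl (f * PowerSeries.X ^ 4) = incl (PowerSeries.X ^ 3 * w) := by
    rw [← hf, map_mul, map_pow]
    rfl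
  have hw' : w = PowerSeries.X * f := by
    refine mul_left_cancel₀ (pow_ne_zero 3 PowerSeries.X_ne_zero) ?_
    rw [← incl_injective hf']
    ring
  simp [hw']

/-- The factor of `F m` coming from the bundle `O(1)² ⊕ O(2)`, on the line `x = (t, 2t, 3t)`. -/
def lineFactor (m : ℕ) : PowerSeries ℚ :=
  rising (6 * PowerSeries.X) m ^ 2 * rising (12 * PowerSeries.X) (2 * m)

lemma constantCoeff_lineFactor (m : ℕ) :
    PowerSeries.constantCoeff (lineFactor m) = (m.factorial : ℚ) ^ 2 * (2 * m).factorial := by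
  have hrising (k : ℕ) : rising (0 : ℚ) k = k.factorial := by
    induction k with
    | zero => simp [rising]
    | succ k ih =>
      rw [rising, Finset.prod_Icc_succ_top (by omega), ← rising, ih, Nat.factorial_succ]
      push_cast
      ring
  simp [lineFactor, map_rising, hrising]

lemma numer_line {K : Type*} [Field K] {A : Subring K} {t : K} (h : IsGerm A t)
    (d : Fin 3 → ℕ) :
    numer (fun i : Fin 3 => (((i : ℕ) + 1 : ℕ) : K) * t) d =
      (rising (6 * t) (∑ i, d i) ^ 2 * rising (12 * t) (2 * ∑ i, d i)) *
        (vandermonde (point t d) * weight t d) *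
        denom (fun i : Fin 3 => (((i : ℕ) + 1 : ℕ) : K) * t) d ^ 6 := by
  have hden : denom (fun i : Fin 3 => (((i : ℕ) + 1 : ℕ) : K) * t) d ≠ 0 :=
    mul_ne_zero (mul_ne_zero (h.rising_ne_zero _ _) (h.rising_ne_zero _ _)) (h.rising_ne_zero _ _)
  have hweight : weight t d * denom (fun i : Fin 3 => (((i : ℕ) + 1 : ℕ) : K) * t) d ^ 6 =
      rising (3 * t) (d 0 + d 1) * rising (4 * t) (d 0 + d 2) * rising (5 * t) (d 1 + d 2) := by
    have hdef : denom (fun i : Fin 3 => (((i : ℕ) + 1 : ℕ) : K) * t) d =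
        rising t (d 0) * rising (2 * t) (d 1) * rising (3 * t) (d 2) := by
      norm_num [denom]
    rw [weight, ← hdef, div_mul_cancel₀ _ (pow_ne_zero 6 hden)]
  have hpoint : (fun i : Fin 3 => (((i : ℕ) + 1 : ℕ) : K) * t + d i) = point t d := by
    funext i
    rw [point, add_comm]
  have h01 : (((0 : Fin 3) : ℕ) + 1 : ℕ) * t + (((1 : Fin 3) : ℕ) + 1 : ℕ) * t = 3 * t := by
    norm_num
    ring
  have h02 : (((0 : Fin 3) : ℕ) + 1 : ℕ) * t + (((2 : Fin 3) : ℕ) + 1 : ℕ) * t = 4 * t := by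
    norm_num
    ring
  have h12 : (((1 : Fin 3) : ℕ) + 1 : ℕ) * t + (((2 : Fin 3) : ℕ) + 1 : ℕ) * t = 5 * t := by
    norm_num
    ring
  have h012 : 3 * t + (((2 : Fin 3) : ℕ) + 1 : ℕ) * t = 6 * t := by
    norm_num
    ring
  rw [numer, hpoint, Fin.sum_univ_three, h01, h02, h12, h012,
    show (2 : K) * (6 * t) = 12 * t by ring]
  linear_combination (-(rising (6 * t) (d 0 + d 1 + d 2) ^ 2 *
    rising (12 * t) (2 * (d 0 + d 1 + d 2)) * vandermonde (point t d))) * hweight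

lemma incl_restrictLine_F (m : ℕ) :
    incl (restrictLine (F m)) =
      incl (lineFactor m) * moment (incl PowerSeries.X) (fun _ => 1) m := by
  have hX (i : Fin 3) : (incl.comp restrictLine) (MvPowerSeries.X i) =
      (((i : ℕ) + 1 : ℕ) : L) * incl PowerSeries.X := by
    simp [restrictLine_X]
  rw [F_eq_sum, map_sum, map_sum, moment, Finset.mul_sum]
  refine Finset.sum_congr rfl fun d hd => ?_
  have hT := congrArg (incl.comp restrictLine) (T_mul_denom d)
  rw [map_mul, map_pow, map_numer, map_denom, funext hX, numer_line isGerm_X,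
    (Finset.mem_piAntidiag.1 hd).1] at hT
  have hden : denom (fun i : Fin 3 => (((i : ℕ) + 1 : ℕ) : L) * incl PowerSeries.X) d ≠ 0 :=
    mul_ne_zero (mul_ne_zero (isGerm_X.rising_ne_zero _ _) (isGerm_X.rising_ne_zero _ _))
      (isGerm_X.rising_ne_zero _ _)
  rw [one_mul]
  simpa [lineFactor, map_rising, map_ofNat] using mul_right_cancel₀ (pow_ne_zero 6 hden) hT

lemma exists_moment_eq {m : ℕ} {G : R} (hG : F m = Vand * G) :
    ∃ v : PowerSeries ℚ,
      moment (incl PowerSeries.X) (fun _ => 1) m = incl (PowerSeries.X ^ 3 * v) ∧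
      MvPowerSeries.constantCoeff G =
        -(1 / 2) * ((m.factorial : ℚ) ^ 2 * (2 * m).factorial) * PowerSeries.constantCoeff v := by
  have hcoeff := constantCoeff_lineFactor m
  have hne : PowerSeries.constantCoeff (lineFactor m) ≠ 0 := by
    rw [hcoeff]
    positivity
  have hne' : incl (lineFactor m) ≠ 0 := by
    rw [ne_eq, map_eq_zero_iff _ incl_injective]
    rintro hzero
    simp [hzero] at hne
  refine ⟨-2 * restrictLine G * (lineFactor m)⁻¹, ?_, ?_⟩
  · refine mul_left_cancel₀ hne' ?_
    have hVand : restrictLine Vand = -2 * PowerSeries.X ^ 3 := by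
      rw [Vand_eq, map_vandermonde]
      simp [vandermonde, restrictLine_X]
      ring
    rw [← incl_restrictLine_F, hG, ← map_mul, map_mul, hVand]
    congr 1
    linear_combination (2 * PowerSeries.X ^ 3 * restrictLine G) *
      PowerSeries.mul_inv_cancel _ hne
  · rw [map_mul, map_mul, PowerSeries.constantCoeff_inv, constantCoeff_restrictLine, ← hcoeff,
      map_neg, map_ofNat]
    field_simp

lemma recurrence {v : ℕ → PowerSeries ℚ}
    (hv : ∀ m, moment (incl PowerSeries.X) (fun _ => 1) m = incl (PowerSeries.X ^ 3 * v m))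
    (m : ℕ) :
    ((m : ℚ) + 2) ^ 7 * (m + 1) * PowerSeries.constantCoeff (v (m + 2))
      - 4 * (m + 1) * (2 * m + 3) * (3 * m ^ 2 + 9 * m + 7) * PowerSeries.constantCoeff (v (m + 1))
      + 16 * PowerSeries.constantCoeff (v m) = 0 := by
  set s : PowerSeries ℚ := ((m + 2 : ℕ) : PowerSeries ℚ) + 6 * PowerSeries.X with hs
  set s' : PowerSeries ℚ := ((m + 1 : ℕ) : PowerSeries ℚ) + 6 * PowerSeries.X with hs'
  have hs₁ : incl s = ((m + 1 + 1 : ℕ) : L) + 6 * incl PowerSeries.X := by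
    simp [hs, map_ofNat]
    ring
  have hs₂ : incl s' = ((m + 1 : ℕ) : L) + 6 * incl PowerSeries.X := by simp [hs', map_ofNat]
  have hrel := isGerm_X.moment_one_relation (m + 1) _ _ hs₁ hs₂
  have hrel' := isGerm_X.moment_e₃_relation m
  rw [← hs₂] at hrel'
  have hmem := (fourthOrder incl.range (incl PowerSeries.X)).sub_mem
    (mul_mem_fourthOrder ⟨s', rfl⟩ hrel) (mul_mem_fourthOrder ⟨4 * s, rfl⟩ hrel')
  rw [hv, hv, hv] at hmem
  have hzero := constantCoeff_eq_zero_of_mem (w := s * (s ^ 7 * s' * v (m + 2)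
    + (4 * s' * (s ^ 3 - 2 * s ^ 2 - 2 * (s' ^ 2 + 2 * s') - 8 * s * s' ^ 2) + 4 * s' ^ 4)
      * v (m + 1) + 16 * v m)) (by
    convert hmem using 1
    simp only [map_mul, map_add, map_sub, map_pow, map_ofNat]
    ring)
  simp only [hs, hs', map_mul, map_add, map_sub, map_pow, map_ofNat, map_natCast,
    PowerSeries.constantCoeff_X, mul_zero, add_zero, mul_eq_zero] at hzero
  have hne : ((m + 2 : ℕ) : ℚ) ≠ 0 := by positivity
  have hzero' := hzero.resolve_left hne
  push_cast at hzero'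
  linear_combination hzero'

lemma initial_relation {v : ℕ → PowerSeries ℚ}
    (hv : ∀ m, moment (incl PowerSeries.X) (fun _ => 1) m = incl (PowerSeries.X ^ 3 * v m)) :
    PowerSeries.constantCoeff (v 1) = 4 * PowerSeries.constantCoeff (v 0) := by
  obtain ⟨s, hs⟩ : ∃ s : PowerSeries ℚ, s = 1 + 6 * PowerSeries.X := ⟨_, rfl⟩
  obtain ⟨s', hs'⟩ : ∃ s' : PowerSeries ℚ, s' = 6 * PowerSeries.X := ⟨_, rfl⟩
  have hs₁ : incl s = ((0 + 1 : ℕ) : L) + 6 * incl PowerSeries.X := by simp [hs, map_ofNat]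
  have hs₂ : incl s' = ((0 : ℕ) : L) + 6 * incl PowerSeries.X := by simp [hs', map_ofNat]
  have hrel := isGerm_X.moment_one_relation 0 _ _ hs₁ hs₂
  have he₃ := moment_zero_mem (A := incl.range) e₃ (a := 6 * incl PowerSeries.X ^ 2)
    ⟨6 * PowerSeries.X ^ 2, by simp [map_ofNat]⟩ (by simp [e₃]; ring)
  have hmem := (fourthOrder incl.range (incl PowerSeries.X)).sub_mem hrel
    (mul_mem_fourthOrder ⟨32 * s, rfl⟩ he₃)
  rw [hv, hv] at hmem
  have hzero := constantCoeff_eq_zero_of_mem (w := s ^ 8 * v 1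
    + 4 * (s ^ 4 - 2 * s ^ 3 - 2 * s * (s' ^ 2 + 2 * s') - 8 * s ^ 2 * s' ^ 2) * v 0) (by
    convert hmem using 1
    simp only [map_mul, map_add, map_sub, map_pow, map_ofNat]
    ring)
  simp [hs, hs', map_ofNat] at hzero
  linarith

end Specialization

/-- every `F_δ` is divisible by the Vandermonde `Δ`, and the series
`I₀ = Σ a_δ q^δ` with `a_δ = (F_δ/Δ)(0)` is annihilated by the stated
Picard–Fuchs operator. -/
theorem stmt_10 :
    (∀ δ : ℕ, ∃ G : R, F δ = Vand * G) ∧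
    (∀ G : ℕ → R, (∀ δ : ℕ, F δ = Vand * G δ) →
      ∀ I₀ : PowerSeries ℚ,
        I₀ = PowerSeries.mk (fun δ => MvPowerSeries.constantCoeff (G δ)) →
        th^[4] I₀ - 8 * PowerSeries.X * ((fun g => 2 * th g + g) ((fun g => 2 * th g + g) (3 * th^[2] I₀ + 3 * th I₀ + I₀))) + 64 * PowerSeries.X ^ 2 * ((fun g => th g + g) ((fun g => th g + g) ((fun g => 2 * th g + g) ((fun g => 2 * th g + 3 * g) (I₀))))) = 0) := by
  refine ⟨fun δ => Vand_dvd_F δ, ?_⟩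
  rintro G hG I₀ rfl
  choose v hv hcoeff using fun δ => exists_moment_eq (hG δ)
  have hth (f : PowerSeries ℚ) (k : ℕ) :
      PowerSeries.coeff k (th f) = k * PowerSeries.coeff k f := by simp [th]
  have hnum (c : ℕ) [c.AtLeastTwo] (f : PowerSeries ℚ) (k : ℕ) :
      PowerSeries.coeff k ((OfNat.ofNat c : PowerSeries ℚ) * f) =
        (OfNat.ofNat c : ℚ) * PowerSeries.coeff k f := by
    rw [← map_ofNat (PowerSeries.C (R := ℚ)) c, PowerSeries.coeff_C_mul]
  ext k
  simp only [Function.iterate_succ, Function.iterate_zero, Function.comp_apply, id, pow_two,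
    mul_assoc, map_add, map_sub, map_zero, hnum]
  match k with
  | 0 => simp [hth]
  | 1 =>
    have hinit := initial_relation hv
    simp only [PowerSeries.coeff_succ_X_mul, PowerSeries.coeff_zero_X_mul, map_add, hnum, hth,
      PowerSeries.coeff_mk, hcoeff, hinit]
    norm_num
    ring
  | m + 2 =>
    have hrec := recurrence hv m
    simp only [PowerSeries.coeff_succ_X_mul, map_add, hnum, hth, PowerSeries.coeff_mk, hcoeff]
    rw [show 2 * (m + 2) = 2 * m + 1 + 1 + 1 + 1 by ring, show 2 * (m + 1) = 2 * m + 1 + 1 by ring]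
    simp only [Nat.factorial_succ]
    push_cast
    linear_combination (-(1 / 2) * ((m.factorial : ℚ) ^ 2 * (2 * m).factorial) *
      (4 * (m + 1) ^ 2 * (2 * m + 1) * (2 * m + 3))) * hrec

end Stmt10
end
end

section
/- Take k = 3, n = 7 and the weight vectors (1,1,0), (1,0,1), (0,1,1) each taken twice, together with (1,1,1) taken three times, in the Vandermonde-quotient construction. Then for every δ ≥ 0 the power series F_δ ∈ ℚ[[x₁,x₂,x₃]] is divisible by Δ = (x₁−x₂)(x₁−x₃)(x₂−x₃), and the resulting series I₀(q) = Σ_{δ≥0} a_δ q^δ with a_δ = (F_δ/Δ)(0) satisfies {3721θ⁴ − 61q(3029θ⁴+5572θ³+4677θ²+1891θ+305) + q²(1215215θ⁴+3428132θ³+4267228θ²+2572675θ+611586) − 81q³(39370θ⁴+140178θ³+206807θ²+142191θ+37332) + 6561q⁴(566θ⁴+2230θ³+3356θ²+2241θ+558) − 1594323q⁵(θ+1)⁴} I₀ = 0. -/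
noncomputable section
namespace Stmt11

/-- The multivariable power series ring `ℚ[[x₁,…,x_3]]`. -/
abbrev R := MvPowerSeries (Fin 3) ℚ

/-- The constant `a` in `R`. -/
def Cc (a : ℚ) : R := MvPowerSeries.C a

/-- The pairs `i < j`. -/
def pairs : Finset (Fin 3 × Fin 3) := Finset.univ.filter fun p => p.1 < p.2

/-- The Vandermonde element `Δ = ∏_{i<j}(x_i − x_j)`. -/
def Vand : R := ∏ p ∈ pairs, (MvPowerSeries.X p.1 - MvPowerSeries.X p.2)

/-- The weight vectors. -/
def ws : List (Fin 3 → ℕ) := [![1, 1, 0], ![1, 1, 0], ![1, 0, 1], ![1, 0, 1], ![0, 1, 1], ![0, 1, 1], ![1, 1, 1], ![1, 1, 1], ![1, 1, 1]]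

/-- `n = 7`. -/
def n : ℕ := 7

/-- The term `T_d` of the Vandermonde-quotient construction:
`T_d = ∏_{i<j}(x_i−x_j+d_i−d_j) · ∏_s ∏_{m=1}^{⟨wˢ,d⟩}(⟨wˢ,x⟩+m) · u_d⁻¹`. -/
def T (d : Fin 3 → ℕ) : R :=
  (∏ p ∈ pairs,
      (MvPowerSeries.X p.1 - MvPowerSeries.X p.2 + Cc ((d p.1 : ℚ) - (d p.2 : ℚ)))) *
    (ws.map fun w =>
      ∏ m ∈ Finset.Icc 1 (∑ j, w j * d j),
        ((∑ j, Cc ((w j : ℚ)) * MvPowerSeries.X j) + Cc (m : ℚ))).prod *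
    (∏ j, ∏ m ∈ Finset.Icc 1 (d j), (MvPowerSeries.X j + Cc (m : ℚ)) ^ n)⁻¹

/-- `F_δ = Σ_{d₁+⋯+d_k=δ} T_d`. -/
def F (δ : ℕ) : R :=
  ∑ d ∈ (Fintype.piFinset fun _ : Fin 3 => Finset.range (δ + 1)).filter
      (fun d => ∑ j, d j = δ), T d

/-- The Euler operator `θ = q·d/dq` on `ℚ[[q]]`. -/
def th (f : PowerSeries ℚ) : PowerSeries ℚ :=
  PowerSeries.mk fun d => (d : ℚ) * PowerSeries.coeff d f

/-! ### Summation over the simplex `d₀ + d₁ + d₂ = δ` -/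

/-- The index set of `F δ`. -/
def simplex (δ : ℕ) : Finset (Fin 3 → ℕ) :=
  (Fintype.piFinset fun _ : Fin 3 => Finset.range (δ + 1)).filter (fun d => ∑ j, d j = δ)

theorem mem_simplex {δ : ℕ} {d : Fin 3 → ℕ} : d ∈ simplex δ ↔ d 0 + d 1 + d 2 = δ := by
  simp only [simplex, Finset.mem_filter, Fintype.mem_piFinset, Finset.mem_range,
    Fin.sum_univ_three, Fin.forall_fin_succ]
  constructor
  · exact fun h => h.2
  · intro h
    refine ⟨⟨?_, ?_, ?_, fun i => i.elim0⟩, h⟩ <;> simp <;> omega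

/-- Lowering one coordinate identifies the part of the simplex of size `δ + 1` on which that
coordinate is positive with the simplex of size `δ`. -/
theorem sum_simplex_shift {M : Type*} [AddCommMonoid M] (δ : ℕ) (k : Fin 3)
    (f : (Fin 3 → ℕ) → M) :
    (∑ d ∈ simplex (δ + 1), if d k = 0 then 0 else f (Function.update d k (d k - 1))) =
      ∑ z ∈ simplex δ, f z := by
  have hsum : ∀ d : Fin 3 → ℕ, d 0 + d 1 + d 2 = ∑ j, d j := fun d =>
    (Fin.sum_univ_three d).symm
  have hup : ∀ (d : Fin 3 → ℕ) (a : ℕ), ∑ j, Function.update d k a j + d k = ∑ j, d j + a := by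
    intro d a
    rw [Finset.sum_update_of_mem (Finset.mem_univ k), ← Finset.sum_sdiff
      (Finset.subset_univ {k}) (f := d), Finset.sum_singleton]
    omega
  simp_rw [← ite_not (_ = 0)]
  rw [← Finset.sum_filter]
  refine Finset.sum_nbij' (fun d => Function.update d k (d k - 1))
    (fun z => Function.update z k (z k + 1)) ?_ ?_ ?_ ?_ ?_
  · intro d hd
    simp only [Finset.mem_filter, mem_simplex, hsum] at hd ⊢
    have := hup d (d k - 1)
    omega
  · intro z hz
    simp only [Finset.mem_filter, mem_simplex, hsum] at hz ⊢
    have := hup z (z k + 1)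
    refine ⟨by omega, by simp⟩
  · intro d hd
    have hk : d k ≠ 0 := (Finset.mem_filter.mp hd).2
    simp [Nat.sub_add_cancel (Nat.one_le_iff_ne_zero.mpr hk)]
  · intro z _
    simp
  · intro d _
    rfl

/-! ### The weight of a lattice point along a line -/

/-- The factor `∏_{m=1}^{δ-d} (m - x)² / ∏_{m=1}^{d} (x + m)⁷` attached to one coordinate. -/
def wt (x : PowerSeries ℚ) (δ d : ℕ) : PowerSeries ℚ :=
  (∏ m ∈ Finset.range (δ - d), (((m : PowerSeries ℚ) + 1) - x)) ^ 2 *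
    ((∏ m ∈ Finset.range d, (x + ((m : PowerSeries ℚ) + 1))) ^ 7)⁻¹

theorem wt_succ_left (x : PowerSeries ℚ) {δ d : ℕ} (h : d ≤ δ) :
    wt x (δ + 1) d = ((δ : PowerSeries ℚ) + 1 - (x + d)) ^ 2 * wt x δ d := by
  rw [wt, wt, Nat.succ_sub h, Finset.prod_range_succ, Nat.cast_sub h]
  ring

theorem constantCoeff_add_natCast_succ_ne_zero {x : PowerSeries ℚ}
    (hx : PowerSeries.constantCoeff x = 0) (m : ℕ) :
    PowerSeries.constantCoeff (x + ((m : PowerSeries ℚ) + 1)) ≠ 0 := by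
  simp only [map_add, hx, map_natCast, map_one, zero_add]
  positivity

theorem wt_eq_wt_succ {x : PowerSeries ℚ} (hx : PowerSeries.constantCoeff x = 0) (δ d : ℕ) :
    wt x δ d = (x + ((d : PowerSeries ℚ) + 1)) ^ 7 * wt x (δ + 1) (d + 1) := by
  have h : (x + ((d : PowerSeries ℚ) + 1)) ^ 7 * ((x + ((d : PowerSeries ℚ) + 1)) ^ 7)⁻¹ = 1 :=
    PowerSeries.mul_inv_cancel _ (by
      rw [map_pow]; exact pow_ne_zero _ (constantCoeff_add_natCast_succ_ne_zero hx d))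
  rw [wt, wt, Nat.add_sub_add_right, Finset.prod_range_succ _ d, mul_pow, PowerSeries.mul_inv_rev]
  linear_combination (-(∏ m ∈ Finset.range (δ - d), (((m : PowerSeries ℚ) + 1) - x)) ^ 2 *
    ((∏ m ∈ Finset.range d, (x + ((m : PowerSeries ℚ) + 1))) ^ 7)⁻¹) * h

/-- A direction in the plane `x₀ + x₁ + x₂ = 0` with distinct nonzero entries. -/
def slope : Fin 3 → ℚ := ![1, 2, -3]

/-- The point of the line with direction `slope`. -/
def pt (i : Fin 3) : PowerSeries ℚ := PowerSeries.C (slope i) * PowerSeries.X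

theorem slope_ne_zero (i : Fin 3) : slope i ≠ 0 := by
  fin_cases i <;> simp [slope]

theorem constantCoeff_pt (i : Fin 3) : PowerSeries.constantCoeff (pt i) = 0 := by
  simp [pt]

theorem pt_sum : pt 0 + pt 1 + pt 2 = 0 := by
  have h : slope 0 + slope 1 + slope 2 = 0 := by
    simp only [slope, Matrix.cons_val]
    norm_num
  rw [pt, pt, pt, ← add_mul, ← add_mul, ← map_add, ← map_add, h, map_zero, zero_mul]

/-- The sum over the simplex of `Φ` at the shifted lattice points, against the weights. -/
def wsum (Φ : PowerSeries ℚ → PowerSeries ℚ → PowerSeries ℚ → PowerSeries ℚ) (δ : ℕ) :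
    PowerSeries ℚ :=
  ∑ d ∈ simplex δ, Φ (pt 0 + (d 0 : ℕ)) (pt 1 + (d 1 : ℕ)) (pt 2 + (d 2 : ℕ)) *
    (wt (pt 0) δ (d 0) * wt (pt 1) δ (d 1) * wt (pt 2) δ (d 2))

/-! ### Telescoping -/

open PowerSeries in
theorem X_pow_four_dvd_of_pt_sq_mul {i : Fin 3} {f : PowerSeries ℚ}
    (h : (X : PowerSeries ℚ) ^ 7 ∣ pt i ^ 2 * f) : (X : PowerSeries ℚ) ^ 4 ∣ f := by
  obtain ⟨w, hw⟩ := h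
  have hc : (C (slope i)⁻¹ : PowerSeries ℚ) * C (slope i) = 1 := by
    rw [← map_mul, inv_mul_cancel₀ (slope_ne_zero i), map_one]
  have h2 : (X : PowerSeries ℚ) ^ 2 * f = X ^ 2 * (X ^ 5 * (C (slope i)⁻¹ ^ 2 * w)) := by
    rw [pt] at hw
    linear_combination C (slope i)⁻¹ ^ 2 * hw -
      X ^ 2 * f * (C (slope i)⁻¹ * C (slope i) + 1) * hc
  rw [mul_left_cancel₀ (pow_ne_zero 2 X_ne_zero) h2]
  exact Dvd.dvd.mul_right (pow_dvd_pow _ (by norm_num)) _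

open PowerSeries in
theorem X_pow_seven_dvd_pt_pow (i : Fin 3) : (X : PowerSeries ℚ) ^ 7 ∣ pt i ^ 7 := by
  rw [pt, mul_pow]
  exact dvd_mul_left _ _

/-- The contribution of coordinate `i` to the telescoping identity, dropped on the face `d = 0`,
is the value of the summand at the point with that coordinate lowered. -/
theorem X_pow_seven_dvd_shift (i : Fin 3) {δ d : ℕ} (h : d ≤ δ) (q : PowerSeries ℚ) :
    (PowerSeries.X : PowerSeries ℚ) ^ 7 ∣
      (pt i + d) ^ 7 * ((δ : PowerSeries ℚ) + 1 - (pt i + d)) ^ 2 * wt (pt i) δ d * q -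
        if d = 0 then 0 else wt (pt i) δ (d - 1) * q := by
  rcases d with _ | d
  · simp only [Nat.cast_zero, add_zero, if_true, sub_zero, mul_assoc]
    exact Dvd.dvd.mul_right (X_pow_seven_dvd_pt_pow i) _
  · rw [if_neg (Nat.succ_ne_zero d), Nat.add_sub_cancel,
      wt_eq_wt_succ (constantCoeff_pt i) δ d, wt_succ_left _ h]
    push_cast
    convert dvd_zero _ using 1
    ring

section Telescope

variable {P B : PowerSeries ℚ → PowerSeries ℚ → PowerSeries ℚ → PowerSeries ℚ} {δ : ℕ}

/-- The polynomial identity behind the telescoping of the certificate `P` for the summand `B`. -/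
def IsCertificate (P B : PowerSeries ℚ → PowerSeries ℚ → PowerSeries ℚ → PowerSeries ℚ)
    (δ : ℕ) : Prop :=
  ∀ y₀ y₁ y₂ : PowerSeries ℚ, y₀ + y₁ + y₂ = (δ : PowerSeries ℚ) + 1 →
    y₀ ^ 7 * ((δ : PowerSeries ℚ) + 1 - y₀) ^ 2 * P y₁ y₂ (y₀ - 1) +
      y₁ ^ 7 * ((δ : PowerSeries ℚ) + 1 - y₁) ^ 2 * P y₂ y₀ (y₁ - 1) +
      y₂ ^ 7 * ((δ : PowerSeries ℚ) + 1 - y₂) ^ 2 * P y₀ y₁ (y₂ - 1) =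
    B y₀ y₁ y₂ * (((δ : PowerSeries ℚ) + 1 - y₀) ^ 2 * ((δ : PowerSeries ℚ) + 1 - y₁) ^ 2 *
      ((δ : PowerSeries ℚ) + 1 - y₂) ^ 2)

theorem X_pow_four_dvd_interior (h : IsCertificate P B δ) {i j k : Fin 3} {a b c : ℕ}
    (hpt : pt i + pt j + pt k = 0) (hd : a + b + c = δ + 1) (ha : a ≤ δ) (hb : b ≤ δ)
    (hc : c ≤ δ) :
    (PowerSeries.X : PowerSeries ℚ) ^ 4 ∣
      B (pt i + a) (pt j + b) (pt k + c) *
          (wt (pt i) (δ + 1) a * wt (pt j) (δ + 1) b * wt (pt k) (δ + 1) c) -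
        ((if a = 0 then 0 else wt (pt i) δ (a - 1) *
            (P (pt j + b) (pt k + c) (pt i + a - 1) * (wt (pt j) δ b * wt (pt k) δ c))) +
          (if b = 0 then 0 else wt (pt j) δ (b - 1) *
            (P (pt k + c) (pt i + a) (pt j + b - 1) * (wt (pt k) δ c * wt (pt i) δ a))) +
          (if c = 0 then 0 else wt (pt k) δ (c - 1) *
            (P (pt i + a) (pt j + b) (pt k + c - 1) * (wt (pt i) δ a * wt (pt j) δ b)))) := by
  have hd' : (a : PowerSeries ℚ) + b + c = δ + 1 := by
    simpa using congrArg (Nat.cast : ℕ → PowerSeries ℚ) hd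
  have key := h (pt i + a) (pt j + b) (pt k + c) (by linear_combination hpt + hd')
  refine (pow_dvd_pow _ (by norm_num : 4 ≤ 7)).trans ?_
  have hi := X_pow_seven_dvd_shift i ha
    (P (pt j + b) (pt k + c) (pt i + a - 1) * (wt (pt j) δ b * wt (pt k) δ c))
  have hj := X_pow_seven_dvd_shift j hb
    (P (pt k + c) (pt i + a) (pt j + b - 1) * (wt (pt k) δ c * wt (pt i) δ a))
  have hk := X_pow_seven_dvd_shift k hc
    (P (pt i + a) (pt j + b) (pt k + c - 1) * (wt (pt i) δ a * wt (pt j) δ b))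
  convert dvd_add (dvd_add hi hj) hk using 1
  rw [wt_succ_left _ ha, wt_succ_left _ hb, wt_succ_left _ hc]
  linear_combination (-(wt (pt i) δ a * wt (pt j) δ b * wt (pt k) δ c)) * key

theorem X_pow_four_dvd_vertex (h : IsCertificate P B δ) {i j k : Fin 3}
    (hpt : pt i + pt j + pt k = 0) :
    (PowerSeries.X : PowerSeries ℚ) ^ 4 ∣
      B (pt i + ((δ + 1 : ℕ) : PowerSeries ℚ)) (pt j) (pt k) *
          (wt (pt i) (δ + 1) (δ + 1) * wt (pt j) (δ + 1) 0 * wt (pt k) (δ + 1) 0) -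
        wt (pt i) δ δ * (P (pt j) (pt k) (pt i + ((δ + 1 : ℕ) : PowerSeries ℚ) - 1) *
          (wt (pt j) δ 0 * wt (pt k) δ 0)) := by
  have key := h (pt i + ((δ + 1 : ℕ) : PowerSeries ℚ)) (pt j) (pt k)
    (by push_cast; linear_combination hpt)
  refine X_pow_four_dvd_of_pt_sq_mul (i := i) ?_
  obtain ⟨u, hu⟩ := X_pow_seven_dvd_pt_pow j
  obtain ⟨v, hv⟩ := X_pow_seven_dvd_pt_pow k
  rw [wt_succ_left _ (Nat.zero_le δ), wt_succ_left _ (Nat.zero_le δ),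
    wt_eq_wt_succ (constantCoeff_pt i) δ δ]
  push_cast at key ⊢
  set W := wt (pt i) (δ + 1) (δ + 1) * wt (pt j) δ 0 * wt (pt k) δ 0
  refine ⟨W * (u * ((δ : PowerSeries ℚ) + 1 - pt j) ^ 2 * P (pt k) (pt i + (δ + 1)) (pt j - 1) +
    v * ((δ : PowerSeries ℚ) + 1 - pt k) ^ 2 * P (pt i + (δ + 1)) (pt j) (pt k - 1)), ?_⟩
  rw [hu, hv] at key
  linear_combination (-W) * key

/-- Summation of the telescoping identity: only terms of order at least four survive on the
faces of the simplex. -/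
theorem coeff_three_wsum_eq (h : IsCertificate P B δ)
    (hB : ∀ y₀ y₁ y₂, B y₁ y₂ y₀ = B y₀ y₁ y₂)
    {Q : PowerSeries ℚ → PowerSeries ℚ → PowerSeries ℚ → PowerSeries ℚ}
    (hQ : ∀ y₀ y₁ y₂ : PowerSeries ℚ, y₀ + y₁ + y₂ = δ →
      P y₁ y₂ y₀ + P y₂ y₀ y₁ + P y₀ y₁ y₂ = Q y₀ y₁ y₂) :
    PowerSeries.coeff 3 (wsum B (δ + 1)) = PowerSeries.coeff 3 (wsum Q δ) := by
  suffices hdvd : (PowerSeries.X : PowerSeries ℚ) ^ 4 ∣ wsum B (δ + 1) - wsum Q δ by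
    have := PowerSeries.X_pow_dvd_iff.mp hdvd 3 (by norm_num)
    rwa [map_sub, sub_eq_zero] at this
  let W : (Fin 3 → ℕ) → PowerSeries ℚ := fun d =>
    wt (pt 0) δ (d 0) * wt (pt 1) δ (d 1) * wt (pt 2) δ (d 2)
  have hshift : wsum Q δ = ∑ d ∈ simplex (δ + 1),
      ((if d 0 = 0 then 0 else wt (pt 0) δ (d 0 - 1) *
          (P (pt 1 + (d 1 : ℕ)) (pt 2 + (d 2 : ℕ)) (pt 0 + (d 0 : ℕ) - 1) *
            (wt (pt 1) δ (d 1) * wt (pt 2) δ (d 2)))) +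
        (if d 1 = 0 then 0 else wt (pt 1) δ (d 1 - 1) *
          (P (pt 2 + (d 2 : ℕ)) (pt 0 + (d 0 : ℕ)) (pt 1 + (d 1 : ℕ) - 1) *
            (wt (pt 2) δ (d 2) * wt (pt 0) δ (d 0)))) +
        (if d 2 = 0 then 0 else wt (pt 2) δ (d 2 - 1) *
          (P (pt 0 + (d 0 : ℕ)) (pt 1 + (d 1 : ℕ)) (pt 2 + (d 2 : ℕ) - 1) *
            (wt (pt 0) δ (d 0) * wt (pt 1) δ (d 1))))) := by
    have hcast : ∀ (x : PowerSeries ℚ) (m : ℕ), m ≠ 0 →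
        x + ((m - 1 : ℕ) : PowerSeries ℚ) = x + m - 1 := by
      intro x m hm
      rw [Nat.cast_sub (Nat.one_le_iff_ne_zero.mpr hm), Nat.cast_one]
      ring
    have h0 := sum_simplex_shift δ 0 fun z =>
      P (pt 1 + (z 1 : ℕ)) (pt 2 + (z 2 : ℕ)) (pt 0 + (z 0 : ℕ)) * W z
    have h1 := sum_simplex_shift δ 1 fun z =>
      P (pt 2 + (z 2 : ℕ)) (pt 0 + (z 0 : ℕ)) (pt 1 + (z 1 : ℕ)) * W z
    have h2 := sum_simplex_shift δ 2 fun z =>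
      P (pt 0 + (z 0 : ℕ)) (pt 1 + (z 1 : ℕ)) (pt 2 + (z 2 : ℕ)) * W z
    have hsplit : wsum Q δ =
        ∑ z ∈ simplex δ, P (pt 1 + (z 1 : ℕ)) (pt 2 + (z 2 : ℕ)) (pt 0 + (z 0 : ℕ)) * W z +
        ∑ z ∈ simplex δ, P (pt 2 + (z 2 : ℕ)) (pt 0 + (z 0 : ℕ)) (pt 1 + (z 1 : ℕ)) * W z +
        ∑ z ∈ simplex δ, P (pt 0 + (z 0 : ℕ)) (pt 1 + (z 1 : ℕ)) (pt 2 + (z 2 : ℕ)) * W z := by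
      rw [← Finset.sum_add_distrib, ← Finset.sum_add_distrib]
      refine Finset.sum_congr rfl fun z hz => ?_
      have hz' : ((z 0 : ℕ) : PowerSeries ℚ) + (z 1 : ℕ) + (z 2 : ℕ) = δ := by
        simpa using congrArg (Nat.cast : ℕ → PowerSeries ℚ) (mem_simplex.mp hz)
      rw [← hQ _ _ _ (by linear_combination pt_sum + hz')]
      ring
    rw [hsplit, ← h0, ← h1, ← h2, ← Finset.sum_add_distrib, ← Finset.sum_add_distrib]
    refine Finset.sum_congr rfl fun d _ => ?_
    congr 1
    · congr 1
      · split_ifs with hd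
        · rfl
        · simp only [W, Function.update_self, Function.update_of_ne, ne_eq, Fin.reduceEq,
            not_false_eq_true, hcast _ _ hd]
          ring
      · split_ifs with hd
        · rfl
        · simp only [W, Function.update_self, Function.update_of_ne, ne_eq, Fin.reduceEq,
            not_false_eq_true, hcast _ _ hd]
          ring
    · split_ifs with hd
      · rfl
      · simp only [W, Function.update_self, Function.update_of_ne, ne_eq, Fin.reduceEq,
          not_false_eq_true, hcast _ _ hd]
        ring
  rw [hshift, wsum, ← Finset.sum_sub_distrib]
  refine Finset.dvd_sum fun d hd => ?_
  have hd := mem_simplex.mp hd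
  by_cases h0 : d 0 ≤ δ
  · by_cases h1 : d 1 ≤ δ
    · by_cases h2 : d 2 ≤ δ
      · exact X_pow_four_dvd_interior h pt_sum hd h0 h1 h2
      · obtain ⟨e0, e1, e2⟩ : d 0 = 0 ∧ d 1 = 0 ∧ d 2 = δ + 1 := by omega
        have := X_pow_four_dvd_vertex h (i := 2) (j := 0) (k := 1)
          (by linear_combination pt_sum)
        simp only [e0, e1, e2, Nat.cast_zero, add_zero, if_true, zero_add, Nat.add_sub_cancel,
          if_neg (Nat.succ_ne_zero δ)]
        convert this using 1
        rw [hB (pt 2 + _)]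
        ring
    · obtain ⟨e0, e1, e2⟩ : d 0 = 0 ∧ d 1 = δ + 1 ∧ d 2 = 0 := by omega
      have := X_pow_four_dvd_vertex h (i := 1) (j := 2) (k := 0)
        (by linear_combination pt_sum)
      simp only [e0, e1, e2, Nat.cast_zero, add_zero, if_true, zero_add, Nat.add_sub_cancel,
        if_neg (Nat.succ_ne_zero δ)]
      convert this using 1
      rw [← hB (pt 0)]
      ring
  · obtain ⟨e0, e1, e2⟩ : d 0 = δ + 1 ∧ d 1 = 0 ∧ d 2 = 0 := by omega
    have := X_pow_four_dvd_vertex h (i := 0) (j := 1) (k := 2) pt_sum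
    simp only [e0, e1, e2, Nat.cast_zero, add_zero, if_true, Nat.add_sub_cancel,
      if_neg (Nat.succ_ne_zero δ)]
    exact this

end Telescope

/-! ### Three certificates -/

/-- The Vandermonde polynomial. -/
def vdm {A : Type*} [CommRing A] (y₀ y₁ y₂ : A) : A := (y₀ - y₁) * (y₀ - y₂) * (y₁ - y₂)

/-- The Vandermonde polynomial times a combination of `1` and the elementary symmetric
polynomials of degrees two and three. -/
def altComb {A : Type*} [CommRing A] (b₀ b₁ b₂ y₀ y₁ y₂ : A) : A :=
  vdm y₀ y₁ y₂ * (b₀ + b₁ * (y₀ * y₁ + y₀ * y₂ + y₁ * y₂) + b₂ * (y₀ * y₁ * y₂))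

/-- A certificate of degree three. -/
def cubicCert {A : Type*} [CommRing A] (N u v z : A) : A :=
  (u - v) * (
    (3 * N + 2) + (3 * N + 1) * z + 4 * (u * v) + (-1) * z ^ 2)

/-- A certificate of degree five. -/
def quinticCert {A : Type*} [CommRing A] (N u v z : A) : A :=
  (u - v) * (
    (71 * N ^ 2 + 87 * N + 22) + (-41 * N ^ 2 - 6 * N - 1) * z +
    (-112 * N ^ 2 + 3 * N + 1) * z ^ 2 + (-244 * N - 4) * z * (u * v) + (96 * N) * z ^ 3 +
    (-132) * (u * v) ^ 2 + 120 * z ^ 2 * (u * v) + (-24) * z ^ 4)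

/-- A certificate of degree seven. -/
def septicCert {A : Type*} [CommRing A] (N u v z : A) : A :=
  (u - v) * (
    (28 * N ^ 4 + 211 * N ^ 3 + 320 * N ^ 2 + 119 * N) +
    (140 * N ^ 4 + 407 * N ^ 3 + 217 * N ^ 2 + 67 * N + 9) * z +
    (112 * N ^ 4 + 1288 * N ^ 3 + 11 * N ^ 2 - 40 * N - 9) * z ^ 2 +
    (112 * N ^ 3 + 1856 * N ^ 2 + 268 * N + 36) * z * (u * v) +
    (1092 * N ^ 3 - 1644 * N ^ 2 - 72 * N) * z ^ 3 +
    (3444 * N ^ 2 - 2154 * N - 90) * z ^ 2 * (u * v) + (-1758 * N ^ 2 + 906 * N + 18) * z ^ 4 +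
    (2904 * N - 660) * z * (u * v) ^ 2 + (-3894 * N + 858) * z ^ 3 * (u * v) +
    (990 * N - 198) * z ^ 5 + 198 * (u * v) ^ 3 + (-1782) * z ^ 2 * (u * v) ^ 2 +
    1188 * z ^ 4 * (u * v) + (-198) * z ^ 6)

theorem cubicCert_telescopes {A : Type*} [CommRing A] {N y₀ y₁ y₂ : A}
    (h : y₀ + y₁ + y₂ = N + 1) :
    y₀ ^ 7 * (N + 1 - y₀) ^ 2 * cubicCert N y₁ y₂ (y₀ - 1) +
      y₁ ^ 7 * (N + 1 - y₁) ^ 2 * cubicCert N y₂ y₀ (y₁ - 1) +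
      y₂ ^ 7 * (N + 1 - y₂) ^ 2 * cubicCert N y₀ y₁ (y₂ - 1) =
    altComb (2 * N ^ 3 + 6 * N ^ 2 + 6 * N + 2)
      (-5 * N - 5)
      3 y₀ y₁ y₂ *
        ((N + 1 - y₀) ^ 2 * (N + 1 - y₁) ^ 2 * (N + 1 - y₂) ^ 2) := by
  obtain rfl : N = y₀ + y₁ + y₂ - 1 := by linear_combination -h
  simp only [cubicCert, altComb, vdm]
  ring

theorem cubicCert_cyclic_sum {A : Type*} [CommRing A] {N y₀ y₁ y₂ : A}
    (h : y₀ + y₁ + y₂ = N) :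
    cubicCert N y₁ y₂ y₀ + cubicCert N y₂ y₀ y₁ + cubicCert N y₀ y₁ y₂ =
    altComb 3
      0 0 y₀ y₁ y₂ := by
  subst h
  simp only [cubicCert, altComb, vdm]
  ring

theorem quinticCert_telescopes {A : Type*} [CommRing A] {N y₀ y₁ y₂ : A}
    (h : y₀ + y₁ + y₂ = N + 1) :
    y₀ ^ 7 * (N + 1 - y₀) ^ 2 * quinticCert N y₁ y₂ (y₀ - 1) +
      y₁ ^ 7 * (N + 1 - y₁) ^ 2 * quinticCert N y₂ y₀ (y₁ - 1) +
      y₂ ^ 7 * (N + 1 - y₂) ^ 2 * quinticCert N y₀ y₁ (y₂ - 1) =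
    altComb (-40 * N ^ 5 - 78 * N ^ 4 + 28 * N ^ 3 + 152 * N ^ 2 + 108 * N + 22)
      (112 * N ^ 3 + 31 * N ^ 2 - 124 * N - 43)
      (-116 * N ^ 2 - 49 * N - 23) y₀ y₁ y₂ *
        ((N + 1 - y₀) ^ 2 * (N + 1 - y₁) ^ 2 * (N + 1 - y₂) ^ 2) := by
  obtain rfl : N = y₀ + y₁ + y₂ - 1 := by linear_combination -h
  simp only [quinticCert, altComb, vdm]
  ring

theorem quinticCert_cyclic_sum {A : Type*} [CommRing A] {N y₀ y₁ y₂ : A}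
    (h : y₀ + y₁ + y₂ = N) :
    quinticCert N y₁ y₂ y₀ + quinticCert N y₂ y₀ y₁ + quinticCert N y₀ y₁ y₂ =
    altComb (-40 * N ^ 2 + 3 * N + 1)
      (-108) 0 y₀ y₁ y₂ := by
  subst h
  simp only [quinticCert, altComb, vdm]
  ring

theorem septicCert_telescopes {A : Type*} [CommRing A] {N y₀ y₁ y₂ : A}
    (h : y₀ + y₁ + y₂ = N + 1) :
    y₀ ^ 7 * (N + 1 - y₀) ^ 2 * septicCert N y₁ y₂ (y₀ - 1) +
      y₁ ^ 7 * (N + 1 - y₁) ^ 2 * septicCert N y₂ y₀ (y₁ - 1) +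
      y₂ ^ 7 * (N + 1 - y₂) ^ 2 * septicCert N y₀ y₁ (y₂ - 1) =
    altComb (238 * N ^ 7 + 730 * N ^ 6 + 884 * N ^ 5 + 780 * N ^ 4 + 766 * N ^ 3 + 506 * N ^ 2 + 128 * N)
      (-706 * N ^ 5 - 926 * N ^ 4 - 561 * N ^ 3 - 637 * N ^ 2 - 305 * N - 9)
      (842 * N ^ 4 + 732 * N ^ 3 + 153 * N ^ 2 - 52 * N + 9) y₀ y₁ y₂ *
        ((N + 1 - y₀) ^ 2 * (N + 1 - y₁) ^ 2 * (N + 1 - y₂) ^ 2) := by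
  obtain rfl : N = y₀ + y₁ + y₂ - 1 := by linear_combination -h
  simp only [septicCert, altComb, vdm]
  ring

theorem septicCert_cyclic_sum {A : Type*} [CommRing A] {N y₀ y₁ y₂ : A}
    (h : y₀ + y₁ + y₂ = N) :
    septicCert N y₁ y₂ y₀ + septicCert N y₂ y₀ y₁ + septicCert N y₀ y₁ y₂ =
    altComb (238 * N ^ 4 + 352 * N ^ 3 - 43 * N ^ 2 - 40 * N - 9)
      (372 * N ^ 2 - 510 * N - 18) (594 * N) y₀ y₁ y₂ := by
  subst h
  simp only [septicCert, altComb, vdm]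
  ring

/-! ### Contiguity relations -/

/-- The sum over the simplex against the Vandermonde polynomial, normalised by `(δ!)³`. -/
def moment (f : PowerSeries ℚ → PowerSeries ℚ → PowerSeries ℚ → PowerSeries ℚ) (δ : ℕ) : ℚ :=
  (δ.factorial : ℚ) ^ 3 * PowerSeries.coeff 3 (wsum (fun y₀ y₁ y₂ => vdm y₀ y₁ y₂ * f y₀ y₁ y₂) δ)

/-- The moment of the constant `1`. -/
def mom₀ (δ : ℕ) : ℚ := moment (fun _ _ _ => 1) δ

/-- The moment of the second elementary symmetric polynomial. -/
def mom₂ (δ : ℕ) : ℚ := moment (fun y₀ y₁ y₂ => y₀ * y₁ + y₀ * y₂ + y₁ * y₂) δ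

/-- The moment of the third elementary symmetric polynomial. -/
def mom₃ (δ : ℕ) : ℚ := moment (fun y₀ y₁ y₂ => y₀ * y₁ * y₂) δ

theorem factorial_mul_coeff_wsum_altComb (b₀ b₁ b₂ : ℚ) (δ : ℕ) :
    (δ.factorial : ℚ) ^ 3 * PowerSeries.coeff 3
        (wsum (altComb (PowerSeries.C b₀) (PowerSeries.C b₁) (PowerSeries.C b₂)) δ) =
      b₀ * mom₀ δ + b₁ * mom₂ δ + b₂ * mom₃ δ := by
  have h : wsum (altComb (PowerSeries.C b₀) (PowerSeries.C b₁) (PowerSeries.C b₂)) δ =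
      PowerSeries.C b₀ * wsum (fun y₀ y₁ y₂ => vdm y₀ y₁ y₂ * 1) δ +
      PowerSeries.C b₁ *
        wsum (fun y₀ y₁ y₂ => vdm y₀ y₁ y₂ * (y₀ * y₁ + y₀ * y₂ + y₁ * y₂)) δ +
      PowerSeries.C b₂ * wsum (fun y₀ y₁ y₂ => vdm y₀ y₁ y₂ * (y₀ * y₁ * y₂)) δ := by
    simp only [wsum, Finset.mul_sum, ← Finset.sum_add_distrib, altComb]
    exact Finset.sum_congr rfl fun d _ => by ring
  rw [h, mom₀, mom₂, mom₃, moment, moment, moment]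
  simp only [map_add, PowerSeries.coeff_C_mul]
  ring

theorem contiguity {P : PowerSeries ℚ → PowerSeries ℚ → PowerSeries ℚ → PowerSeries ℚ} {δ : ℕ}
    {b₀ b₁ b₂ c₀ c₁ c₂ : ℚ}
    (h : IsCertificate P
      (altComb (PowerSeries.C b₀) (PowerSeries.C b₁) (PowerSeries.C b₂)) δ)
    (hQ : ∀ y₀ y₁ y₂ : PowerSeries ℚ, y₀ + y₁ + y₂ = δ → P y₁ y₂ y₀ + P y₂ y₀ y₁ + P y₀ y₁ y₂ =
      altComb (PowerSeries.C c₀) (PowerSeries.C c₁) (PowerSeries.C c₂) y₀ y₁ y₂) :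
    b₀ * mom₀ (δ + 1) + b₁ * mom₂ (δ + 1) + b₂ * mom₃ (δ + 1) =
      ((δ : ℚ) + 1) ^ 3 * (c₀ * mom₀ δ + c₁ * mom₂ δ + c₂ * mom₃ δ) := by
  have hcyc : ∀ y₀ y₁ y₂ : PowerSeries ℚ,
      altComb (PowerSeries.C b₀) (PowerSeries.C b₁) (PowerSeries.C b₂) y₁ y₂ y₀ =
        altComb (PowerSeries.C b₀) (PowerSeries.C b₁) (PowerSeries.C b₂) y₀ y₁ y₂ := by
    intro y₀ y₁ y₂
    simp only [altComb, vdm]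
    ring
  rw [← factorial_mul_coeff_wsum_altComb, ← factorial_mul_coeff_wsum_altComb,
    coeff_three_wsum_eq h hcyc hQ, Nat.factorial_succ]
  push_cast
  ring

theorem cubicCert_contiguity (δ : ℕ) {m : ℚ} (hm : m = δ) :
    (2 * m ^ 3 + 6 * m ^ 2 + 6 * m + 2) * mom₀ (δ + 1) +
      (-5 * m - 5) * mom₂ (δ + 1) +
      3 * mom₃ (δ + 1) =
    (m + 1) ^ 3 * (3 * mom₀ δ +
      0 * mom₂ δ + 0 * mom₃ δ) := by
  have hC : PowerSeries.C m = (δ : PowerSeries ℚ) := by rw [hm, map_natCast]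
  have h := contiguity (P := cubicCert (δ : PowerSeries ℚ)) (δ := δ)
    (b₀ := (2 * m ^ 3 + 6 * m ^ 2 + 6 * m + 2))
    (b₁ := (-5 * m - 5))
    (b₂ := 3)
    (c₀ := 3) (c₁ := 0) (c₂ := 0)
    (fun y₀ y₁ y₂ h => by
      simp only [map_add, map_sub, map_mul, map_pow, map_neg, map_ofNat, hC]
      exact cubicCert_telescopes h)
    (fun y₀ y₁ y₂ h => by
      simp only [map_zero, map_ofNat]
      exact cubicCert_cyclic_sum h)
  rw [h, hm]

theorem quinticCert_contiguity (δ : ℕ) {m : ℚ} (hm : m = δ) :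
    (-40 * m ^ 5 - 78 * m ^ 4 + 28 * m ^ 3 + 152 * m ^ 2 + 108 * m + 22) * mom₀ (δ + 1) +
      (112 * m ^ 3 + 31 * m ^ 2 - 124 * m - 43) * mom₂ (δ + 1) +
      (-116 * m ^ 2 - 49 * m - 23) * mom₃ (δ + 1) =
    (m + 1) ^ 3 * ((-40 * m ^ 2 + 3 * m + 1) * mom₀ δ +
      (-108) * mom₂ δ + 0 * mom₃ δ) := by
  have hC : PowerSeries.C m = (δ : PowerSeries ℚ) := by rw [hm, map_natCast]
  have h := contiguity (P := quinticCert (δ : PowerSeries ℚ)) (δ := δ)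
    (b₀ := (-40 * m ^ 5 - 78 * m ^ 4 + 28 * m ^ 3 + 152 * m ^ 2 + 108 * m + 22))
    (b₁ := (112 * m ^ 3 + 31 * m ^ 2 - 124 * m - 43))
    (b₂ := (-116 * m ^ 2 - 49 * m - 23))
    (c₀ := (-40 * m ^ 2 + 3 * m + 1)) (c₁ := (-108)) (c₂ := 0)
    (fun y₀ y₁ y₂ h => by
      simp only [map_add, map_sub, map_mul, map_pow, map_neg, map_ofNat, hC]
      exact quinticCert_telescopes h)
    (fun y₀ y₁ y₂ h => by
      simp only [map_add, map_mul, map_pow, map_neg, map_zero, map_one, map_ofNat, hC]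
      exact quinticCert_cyclic_sum h)
  rw [h, hm]

theorem septicCert_contiguity (δ : ℕ) {m : ℚ} (hm : m = δ) :
    (238 * m ^ 7 + 730 * m ^ 6 + 884 * m ^ 5 + 780 * m ^ 4 + 766 * m ^ 3 + 506 * m ^ 2 + 128 * m) * mom₀ (δ + 1) +
      (-706 * m ^ 5 - 926 * m ^ 4 - 561 * m ^ 3 - 637 * m ^ 2 - 305 * m - 9) * mom₂ (δ + 1) +
      (842 * m ^ 4 + 732 * m ^ 3 + 153 * m ^ 2 - 52 * m + 9) * mom₃ (δ + 1) =
    (m + 1) ^ 3 * ((238 * m ^ 4 + 352 * m ^ 3 - 43 * m ^ 2 - 40 * m - 9) * mom₀ δ +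
      (372 * m ^ 2 - 510 * m - 18) * mom₂ δ + (594 * m) * mom₃ δ) := by
  have hC : PowerSeries.C m = (δ : PowerSeries ℚ) := by rw [hm, map_natCast]
  have h := contiguity (P := septicCert (δ : PowerSeries ℚ)) (δ := δ)
    (b₀ := (238 * m ^ 7 + 730 * m ^ 6 + 884 * m ^ 5 + 780 * m ^ 4 + 766 * m ^ 3 + 506 * m ^ 2 + 128 * m))
    (b₁ := (-706 * m ^ 5 - 926 * m ^ 4 - 561 * m ^ 3 - 637 * m ^ 2 - 305 * m - 9))
    (b₂ := (842 * m ^ 4 + 732 * m ^ 3 + 153 * m ^ 2 - 52 * m + 9))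
    (c₀ := (238 * m ^ 4 + 352 * m ^ 3 - 43 * m ^ 2 - 40 * m - 9)) (c₁ := (372 * m ^ 2 - 510 * m - 18)) (c₂ := (594 * m))
    (fun y₀ y₁ y₂ h => by
      simp only [map_add, map_sub, map_mul, map_pow, map_neg, map_ofNat, hC]
      exact septicCert_telescopes h)
    (fun y₀ y₁ y₂ h => by
      simp only [map_add, map_sub, map_mul, map_pow, map_ofNat, hC]
      exact septicCert_cyclic_sum h)
  rw [h, hm]

/-! ### The recurrence -/

/-- The contiguity relations after division by `(δ + 1)³`. -/
theorem exists_reduced_moments (δ : ℕ) {m : ℚ} (hm : m = δ) : ∃ w₀ w₂ w₃ : ℚ,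
    mom₀ (δ + 1) = (m + 1) ^ 3 * w₀ ∧ mom₂ (δ + 1) = (m + 1) ^ 3 * w₂ ∧
    mom₃ (δ + 1) = (m + 1) ^ 3 * w₃ ∧
    ((2 * m ^ 3 + 6 * m ^ 2 + 6 * m + 2) * w₀ + (-5 * m - 5) * w₂ +
        (3) * w₃ =
      (3) * mom₀ δ + (0) * mom₂ δ + (0) * mom₃ δ) ∧
    ((-40 * m ^ 5 - 78 * m ^ 4 + 28 * m ^ 3 + 152 * m ^ 2 + 108 * m + 22) * w₀ + (112 * m ^ 3 + 31 * m ^ 2 - 124 * m - 43) * w₂ +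
        (-116 * m ^ 2 - 49 * m - 23) * w₃ =
      (-40 * m ^ 2 + 3 * m + 1) * mom₀ δ + (-108) * mom₂ δ + (0) * mom₃ δ) ∧
    ((238 * m ^ 7 + 730 * m ^ 6 + 884 * m ^ 5 + 780 * m ^ 4 + 766 * m ^ 3 + 506 * m ^ 2 + 128 * m) * w₀ + (-706 * m ^ 5 - 926 * m ^ 4 - 561 * m ^ 3 - 637 * m ^ 2 - 305 * m - 9) * w₂ +
        (842 * m ^ 4 + 732 * m ^ 3 + 153 * m ^ 2 - 52 * m + 9) * w₃ =
      (238 * m ^ 4 + 352 * m ^ 3 - 43 * m ^ 2 - 40 * m - 9) * mom₀ δ + (372 * m ^ 2 - 510 * m - 18) * mom₂ δ + (594 * m) * mom₃ δ) := by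
  have h₁ : m + 1 ≠ 0 := by rw [hm]; positivity
  have h : (m + 1) ^ 3 ≠ 0 := pow_ne_zero 3 h₁
  refine ⟨mom₀ (δ + 1) / (m + 1) ^ 3, mom₂ (δ + 1) / (m + 1) ^ 3, mom₃ (δ + 1) / (m + 1) ^ 3,
    (mul_div_cancel₀ _ h).symm, (mul_div_cancel₀ _ h).symm, (mul_div_cancel₀ _ h).symm,
    ?_, ?_, ?_⟩
  · refine mul_left_cancel₀ h ((Eq.trans ?_ (cubicCert_contiguity δ hm)))
    field_simp
  · refine mul_left_cancel₀ h ((Eq.trans ?_ (quinticCert_contiguity δ hm)))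
    field_simp
  · refine mul_left_cancel₀ h ((Eq.trans ?_ (septicCert_contiguity δ hm)))
    field_simp

/-- The polynomial in `θ` multiplying `q^0` in the operator. -/
def symb₀ (k : ℚ) : ℚ := 3721 * k ^ 4

/-- The polynomial in `θ` multiplying `-q^1` in the operator. -/
def symb₁ (k : ℚ) : ℚ := 61 * (3029 * k ^ 4 + 5572 * k ^ 3 + 4677 * k ^ 2 + 1891 * k + 305)

/-- The polynomial in `θ` multiplying `q^2` in the operator. -/
def symb₂ (k : ℚ) : ℚ := 1215215 * k ^ 4 + 3428132 * k ^ 3 + 4267228 * k ^ 2 + 2572675 * k + 611586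

/-- The polynomial in `θ` multiplying `-q^3` in the operator. -/
def symb₃ (k : ℚ) : ℚ := 81 * (39370 * k ^ 4 + 140178 * k ^ 3 + 206807 * k ^ 2 + 142191 * k + 37332)

/-- The polynomial in `θ` multiplying `q^4` in the operator. -/
def symb₄ (k : ℚ) : ℚ := 6561 * (566 * k ^ 4 + 2230 * k ^ 3 + 3356 * k ^ 2 + 2241 * k + 558)

/-- The polynomial in `θ` multiplying `-q^5` in the operator. -/
def symb₅ (k : ℚ) : ℚ := 1594323 * (k + 1) ^ 4

theorem mom₀_recurrence (a : ℕ) {x : ℚ} (hx : x = a) :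
    symb₀ (x + 5) * mom₀ (a + 5) - symb₁ (x + 4) * mom₀ (a + 4) + symb₂ (x + 3) * mom₀ (a + 3) -
      symb₃ (x + 2) * mom₀ (a + 2) + symb₄ (x + 1) * mom₀ (a + 1) - symb₅ x * mom₀ a = 0 := by
  have h₀ := cubicCert_contiguity a hx
  obtain ⟨p1, q1, r1, hp1, hq1, hr1, A1, B1, C1⟩ :=
    exists_reduced_moments (a + 1) (m := x + 1) (by rw [hx]; push_cast; rfl)
  obtain ⟨p2, q2, r2, hp2, hq2, hr2, A2, B2, C2⟩ :=
    exists_reduced_moments (a + 2) (m := x + 2) (by rw [hx]; push_cast; rfl)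
  obtain ⟨p3, q3, r3, hp3, hq3, hr3, A3, B3, C3⟩ :=
    exists_reduced_moments (a + 3) (m := x + 3) (by rw [hx]; push_cast; rfl)
  obtain ⟨p4, q4, r4, hp4, hq4, hr4, A4, B4, C4⟩ :=
    exists_reduced_moments (a + 4) (m := x + 4) (by rw [hx]; push_cast; rfl)
  simp only [add_assoc, Nat.reduceAdd] at *
  norm_num only at *
  rw [hp1, hq1, hr1] at A2 B2 C2
  rw [hp2, hq2, hr2] at A3 B3 C3
  rw [hp3, hq3, hr3] at A4 B4 C4
  rw [hp4, hp3, hp2, hp1]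
  simp only [symb₀, symb₁, symb₂, symb₃, symb₄, symb₅]
  linear_combination (531441 + 531441 * x) * h₀ +
    (-19418373 - 152947845/4 * x - 109444041/4 * x ^ 2 - 31901769/4 * x ^ 3 - 645165 * x ^ 4) * A1 +
    (266468697/4 + 316752687/4 * x + 63394623/2 * x ^ 2 + 4184865 * x ^ 3 - 35262 * x ^ 4) * A2 +
    (-228522043/6 - 315043711/12 * x - 11806001/4 * x ^ 2 + 15100489/12 * x ^ 3 + 728645/3 * x ^ 4) * A3 +
    (92269637/12 + 20498989/12 * x - 1514447 * x ^ 2 - 3590765/6 * x ^ 3 - 174887/3 * x ^ 4) * A4 +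
    (911979/44 + 2421009/44 * x + 1489347/44 * x ^ 2) * B1 +
    (-10545633/44 - 2867400/11 * x - 751437/11 * x ^ 2) * B2 +
    (16940005/44 + 11533575/44 * x + 1993175/44 * x ^ 2) * B3 +
    (-4863347/36 - 803736/11 * x - 1946083/198 * x ^ 2) * B4 +
    (59049/22) * C1 +
    (-133407/22) * C2 +
    (100467/22) * C3 +
    (-226981/198) * C4

theorem simplex_zero : simplex 0 = {0} := by
  ext d
  simp only [mem_simplex, Finset.mem_singleton, funext_iff, Fin.forall_fin_succ]
  simp [and_assoc]

theorem vdm_pt : vdm (pt 0) (pt 1) (pt 2) = PowerSeries.C (-20) * PowerSeries.X ^ 3 := by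
  simp only [vdm, pt, slope, Matrix.cons_val]
  simp only [map_neg, map_one, map_ofNat]
  ring

theorem moment_zero (f : PowerSeries ℚ → PowerSeries ℚ → PowerSeries ℚ → PowerSeries ℚ) :
    moment f 0 = -20 * PowerSeries.constantCoeff (f (pt 0) (pt 1) (pt 2)) := by
  rw [moment, wsum, simplex_zero, Finset.sum_singleton]
  simp only [Pi.zero_apply, Nat.cast_zero, add_zero, wt, Nat.sub_self, Finset.range_zero,
    Finset.prod_empty, one_pow, vdm_pt, mul_assoc, PowerSeries.coeff_C_mul,
    PowerSeries.coeff_X_pow_mul']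
  simp

theorem moments_zero : mom₀ 0 = -20 ∧ mom₂ 0 = 0 ∧ mom₃ 0 = 0 := by
  simp [mom₀, mom₂, mom₃, moment_zero, constantCoeff_pt]

theorem moments_one : mom₀ 1 = -100 ∧ mom₂ 1 = -40 ∧ mom₃ 1 = -20 := by
  obtain ⟨h₀, h₂, h₃⟩ := moments_zero
  have A := cubicCert_contiguity 0 (m := 0) (by norm_num)
  have B := quinticCert_contiguity 0 (m := 0) (by norm_num)
  have C := septicCert_contiguity 0 (m := 0) (by norm_num)
  norm_num [h₀, h₂, h₃] at A B C
  refine ⟨?_, ?_, ?_⟩ <;> linarith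

theorem moments_two : mom₀ 2 = -1380 ∧ mom₂ 2 = -2400 ∧ mom₃ 2 = -1440 := by
  obtain ⟨h₀, h₂, h₃⟩ := moments_one
  have A := cubicCert_contiguity 1 (m := 1) (by norm_num)
  have B := quinticCert_contiguity 1 (m := 1) (by norm_num)
  have C := septicCert_contiguity 1 (m := 1) (by norm_num)
  norm_num [h₀, h₂, h₃] at A B C
  refine ⟨?_, ?_, ?_⟩ <;> linarith

theorem moments_three : mom₀ 3 = -28540 ∧ mom₂ 3 = -113760 ∧ mom₃ 3 = -92340 := by
  obtain ⟨h₀, h₂, h₃⟩ := moments_two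
  have A := cubicCert_contiguity 2 (m := 2) (by norm_num)
  have B := quinticCert_contiguity 2 (m := 2) (by norm_num)
  have C := septicCert_contiguity 2 (m := 2) (by norm_num)
  norm_num [h₀, h₂, h₃] at A B C
  refine ⟨?_, ?_, ?_⟩ <;> linarith

theorem moments_four : mom₀ 4 = -714980 ∧ mom₂ 4 = -5098880 ∧ mom₃ 4 = -5313280 := by
  obtain ⟨h₀, h₂, h₃⟩ := moments_three
  have A := cubicCert_contiguity 3 (m := 3) (by norm_num)
  have B := quinticCert_contiguity 3 (m := 3) (by norm_num)
  have C := septicCert_contiguity 3 (m := 3) (by norm_num)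
  norm_num [h₀, h₂, h₃] at A B C
  refine ⟨?_, ?_, ?_⟩ <;> linarith

/-! ### Restriction to the line -/

/-- The rising product `∏_{m=1}^{k} (x + m)`. -/
def rise {A : Type*} [CommRing A] (x : A) (k : ℕ) : A :=
  ∏ m ∈ Finset.range k, (x + ((m : A) + 1))

theorem map_rise {A B : Type*} [CommRing A] [CommRing B] (f : A →+* B) (x : A) (k : ℕ) :
    f (rise x k) = rise (f x) k := by
  simp [rise, map_prod]

theorem rise_add {A : Type*} [CommRing A] (x : A) (k l : ℕ) :
    rise x (k + l) = rise x k * rise (x + k) l := by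
  rw [rise, rise, rise, Finset.prod_range_add]
  congr 1
  refine Finset.prod_congr rfl fun m _ => ?_
  push_cast
  ring

theorem rise_zero_left {A : Type*} [CommRing A] (k : ℕ) :
    rise (0 : A) k = (k.factorial : A) := by
  rw [rise, ← Finset.prod_range_add_one_eq_factorial]
  push_cast
  simp

theorem prod_Icc_add_Cc (x : R) (k : ℕ) :
    ∏ m ∈ Finset.Icc 1 k, (x + Cc (m : ℚ)) = rise x k := by
  rw [rise, ← Finset.Ico_add_one_right_eq_Icc, Finset.prod_Ico_eq_prod_range,
    Nat.add_sub_cancel]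
  refine Finset.prod_congr rfl fun m _ => ?_
  rw [Cc, map_natCast]
  push_cast
  ring

/-- The numerator of the term `T d`. -/
def twist {A : Type*} [CommRing A] (x : Fin 3 → A) (d : Fin 3 → ℕ) : A :=
  vdm (x 0 + d 0) (x 1 + d 1) (x 2 + d 2) *
    (rise (x 0 + x 1) (d 0 + d 1) ^ 2 * rise (x 0 + x 2) (d 0 + d 2) ^ 2 *
      rise (x 1 + x 2) (d 1 + d 2) ^ 2 * rise (x 0 + x 1 + x 2) (d 0 + d 1 + d 2) ^ 3)

/-- The denominator of the term `T d`. -/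
def denom {A : Type*} [CommRing A] (x : Fin 3 → A) (d : Fin 3 → ℕ) : A :=
  rise (x 0) (d 0) ^ 7 * rise (x 1) (d 1) ^ 7 * rise (x 2) (d 2) ^ 7

theorem map_twist {A B : Type*} [CommRing A] [CommRing B] (f : A →+* B) (x : Fin 3 → A)
    (d : Fin 3 → ℕ) : f (twist x d) = twist (fun i => f (x i)) d := by
  simp [twist, vdm, map_rise]

theorem map_denom {A B : Type*} [CommRing A] [CommRing B] (f : A →+* B) (x : Fin 3 → A)
    (d : Fin 3 → ℕ) : f (denom x d) = denom (fun i => f (x i)) d := by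
  simp [denom, map_rise]

theorem prod_pairs {A : Type*} [CommRing A] (f : Fin 3 × Fin 3 → A) :
    ∏ p ∈ pairs, f p = f (0, 1) * f (0, 2) * f (1, 2) := by
  have h : pairs = {(0, 1), (0, 2), (1, 2)} := by decide
  rw [h, Finset.prod_insert (by decide), Finset.prod_insert (by decide), Finset.prod_singleton,
    mul_assoc]

theorem Vand_eq : Vand = vdm (MvPowerSeries.X 0) (MvPowerSeries.X 1) (MvPowerSeries.X 2) := by
  rw [Vand, prod_pairs, vdm]

theorem T_eq (d : Fin 3 → ℕ) :
    T d = twist (MvPowerSeries.X : Fin 3 → R) d * (denom (MvPowerSeries.X : Fin 3 → R) d)⁻¹ := by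
  rw [T, prod_pairs, twist, denom]
  congr 1
  · simp only [ws, List.map_cons, List.map_nil, List.prod_cons, List.prod_nil,
      prod_Icc_add_Cc]
    simp only [Fin.sum_univ_three, Matrix.cons_val, Cc, map_sub, map_natCast, Nat.cast_zero, Nat.cast_one, zero_mul, one_mul, zero_add,
      add_zero, mul_one, vdm]
    ring
  · simp only [Finset.prod_pow, prod_Icc_add_Cc, Fin.prod_univ_three, n, mul_pow]

theorem hasSubst_pt : MvPowerSeries.HasSubst (pt : Fin 3 → MvPowerSeries Unit ℚ) :=
  MvPowerSeries.hasSubst_of_constantCoeff_zero constantCoeff_pt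

/-- Restriction of power series to the line with direction `slope`. -/
def toLine : R →+* PowerSeries ℚ := (MvPowerSeries.substAlgHom (R := ℚ) hasSubst_pt).toRingHom

theorem toLine_X (i : Fin 3) : toLine (MvPowerSeries.X i) = pt i :=
  MvPowerSeries.substAlgHom_X hasSubst_pt i

theorem constantCoeff_toLine (f : R) :
    PowerSeries.constantCoeff (toLine f) = MvPowerSeries.constantCoeff f := by
  have h := MvPowerSeries.constantCoeff_subst_eq_zero hasSubst_pt constantCoeff_pt
    (f := f - MvPowerSeries.C (MvPowerSeries.constantCoeff f)) (by simp)
  rw [← MvPowerSeries.substAlgHom_apply hasSubst_pt, map_sub, map_sub, sub_eq_zero] at h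
  refine h.trans ?_
  have h₁ := (MvPowerSeries.substAlgHom (R := ℚ) hasSubst_pt).commutes
    (MvPowerSeries.constantCoeff f)
  exact (congrArg MvPowerSeries.constantCoeff h₁).trans (MvPowerSeries.constantCoeff_C _)

theorem constantCoeff_denom_ne_zero (d : Fin 3 → ℕ) :
    MvPowerSeries.constantCoeff (denom (MvPowerSeries.X : Fin 3 → R) d) ≠ 0 := by
  rw [map_denom]
  simp only [MvPowerSeries.constantCoeff_X, denom, rise_zero_left]
  positivity

theorem toLine_inv {f : R} (hf : MvPowerSeries.constantCoeff f ≠ 0) :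
    toLine f⁻¹ = (toLine f)⁻¹ := by
  rw [PowerSeries.eq_inv_iff_mul_eq_one (by rwa [constantCoeff_toLine]), ← map_mul,
    MvPowerSeries.inv_mul_cancel _ hf, map_one]

theorem toLine_T {δ : ℕ} {d : Fin 3 → ℕ} (hd : d ∈ simplex δ) :
    toLine (T d) = PowerSeries.C ((δ.factorial : ℚ) ^ 3) *
      (vdm (pt 0 + d 0) (pt 1 + d 1) (pt 2 + d 2) *
        (wt (pt 0) δ (d 0) * wt (pt 1) δ (d 1) * wt (pt 2) δ (d 2))) := by
  rw [mem_simplex] at hd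
  have hrise : ∀ i k, rise (-pt i) k =
      ∏ m ∈ Finset.range k, (((m : PowerSeries ℚ) + 1) - pt i) := fun i k =>
    Finset.prod_congr rfl fun m _ => by ring
  have h₀ : pt 1 + pt 2 = -pt 0 := by linear_combination pt_sum
  have h₁ : pt 0 + pt 2 = -pt 1 := by linear_combination pt_sum
  have h₂ : pt 0 + pt 1 = -pt 2 := by linear_combination pt_sum
  have k₀ : d 1 + d 2 = δ - d 0 := by omega
  have k₁ : d 0 + d 2 = δ - d 1 := by omega
  have k₂ : d 0 + d 1 = δ - d 2 := by omega
  rw [T_eq, map_mul, toLine_inv (constantCoeff_denom_ne_zero d), map_twist, map_denom]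
  simp only [toLine_X, twist, denom, PowerSeries.mul_inv_rev]
  rw [pt_sum, hd, h₀, h₁, h₂, k₀, k₁, k₂, rise_zero_left, hrise, hrise, hrise]
  simp only [wt, rise, map_pow, map_natCast]
  ring

theorem toLine_Vand : toLine Vand = PowerSeries.C (-20) * PowerSeries.X ^ 3 := by
  rw [Vand_eq, ← vdm_pt]
  simp [vdm, toLine_X]

theorem constantCoeff_eq_mom₀ {δ : ℕ} {G : R} (hG : F δ = Vand * G) :
    MvPowerSeries.constantCoeff G = -1 / 20 * mom₀ δ := by
  have hF : toLine (F δ) = PowerSeries.C ((δ.factorial : ℚ) ^ 3) *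
      wsum (fun y₀ y₁ y₂ => vdm y₀ y₁ y₂ * 1) δ := by
    simp only [mul_one]
    rw [F, map_sum, wsum, Finset.mul_sum]
    exact Finset.sum_congr rfl fun d hd => toLine_T hd
  have h := congrArg (PowerSeries.coeff 3) hF
  rw [PowerSeries.coeff_C_mul, hG, map_mul, toLine_Vand, mul_assoc, PowerSeries.coeff_C_mul,
    PowerSeries.coeff_X_pow_mul', if_pos le_rfl, Nat.sub_self,
    PowerSeries.coeff_zero_eq_constantCoeff_apply, constantCoeff_toLine] at h
  rw [mom₀, moment, ← h]
  ring

/-! ### Divisibility by the Vandermonde element -/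

/-- The quotient of the common denominator `denom x (δ, δ, δ)` by `denom x d`. -/
def codenom {A : Type*} [CommRing A] (x : Fin 3 → A) (δ : ℕ) (d : Fin 3 → ℕ) : A :=
  rise (x 0 + d 0) (δ - d 0) ^ 7 * rise (x 1 + d 1) (δ - d 1) ^ 7 *
    rise (x 2 + d 2) (δ - d 2) ^ 7

theorem denom_mul_codenom {A : Type*} [CommRing A] (x : Fin 3 → A) {δ : ℕ} {d : Fin 3 → ℕ}
    (hd : d ∈ simplex δ) : denom x d * codenom x δ d = denom x fun _ => δ := by
  rw [mem_simplex] at hd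
  have h : ∀ i, d i ≤ δ → rise (x i) δ = rise (x i) (d i) * rise (x i + d i) (δ - d i) :=
    fun i hi => by rw [← rise_add, Nat.add_sub_cancel' hi]
  rw [denom, denom, codenom, h 0 (by omega), h 1 (by omega), h 2 (by omega)]
  ring

/-- The numerator of `F δ` over the common denominator. -/
def numer {A : Type*} [CommRing A] (x : Fin 3 → A) (δ : ℕ) : A :=
  ∑ d ∈ simplex δ, twist x d * codenom x δ d

theorem map_numer {A B : Type*} [CommRing A] [CommRing B] (f : A →+* B) (x : Fin 3 → A)
    (δ : ℕ) : f (numer x δ) = numer (fun i => f (x i)) δ := by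
  simp [numer, codenom, map_twist, map_rise]

theorem F_eq (δ : ℕ) :
    F δ = numer (MvPowerSeries.X : Fin 3 → R) δ *
      (denom (MvPowerSeries.X : Fin 3 → R) fun _ => δ)⁻¹ := by
  rw [MvPowerSeries.eq_mul_inv_iff_mul_eq (constantCoeff_denom_ne_zero _), F, numer,
    Finset.sum_mul]
  refine Finset.sum_congr rfl fun d hd => ?_
  rw [T_eq, ← denom_mul_codenom _ hd, mul_assoc, ← mul_assoc _⁻¹,
    MvPowerSeries.inv_mul_cancel _ (constantCoeff_denom_ne_zero _), one_mul]

theorem twist_mul_codenom_comp_swap {A : Type*} [CommRing A] (x : Fin 3 → A) (δ : ℕ)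
    (d : Fin 3 → ℕ) {i j : Fin 3} (hij : i ≠ j) :
    twist (x ∘ Equiv.swap i j) (d ∘ Equiv.swap i j) *
        codenom (x ∘ Equiv.swap i j) δ (d ∘ Equiv.swap i j) = -(twist x d * codenom x δ d) := by
  wlog h : i < j generalizing i j
  · rw [Equiv.swap_comm]
    exact this hij.symm (lt_of_le_of_ne (not_lt.mp h) hij.symm)
  have hx : x 1 + x 2 + x 0 = x 0 + x 1 + x 2 := by ring
  have hd : d 1 + d 2 + d 0 = d 0 + d 1 + d 2 := by ring
  have h01 : Equiv.swap (0 : Fin 3) 1 2 = 2 := by decide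
  have h02 : Equiv.swap (0 : Fin 3) 2 1 = 1 := by decide
  have h12 : Equiv.swap (1 : Fin 3) 2 0 = 0 := by decide
  obtain ⟨rfl, rfl⟩ | ⟨rfl, rfl⟩ | ⟨rfl, rfl⟩ :
      (i = 0 ∧ j = 1) ∨ (i = 0 ∧ j = 2) ∨ (i = 1 ∧ j = 2) := by omega
  · simp only [twist, codenom, vdm, Function.comp_apply, Equiv.swap_apply_left,
      Equiv.swap_apply_right, h01, add_comm (x 1) (x 0), add_comm (d 1) (d 0)]
    ring
  · simp only [twist, codenom, vdm, Function.comp_apply, Equiv.swap_apply_left,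
      Equiv.swap_apply_right, h02, add_comm (x 2) (x 1), add_comm (d 2) (d 1),
      add_comm (x 2) (x 0), add_comm (d 2) (d 0), add_comm (x 1) (x 0), add_comm (d 1) (d 0),
      hx, hd]
    ring
  · simp only [twist, codenom, vdm, Function.comp_apply, Equiv.swap_apply_left,
      Equiv.swap_apply_right, h12, add_comm (x 2) (x 1), add_comm (d 2) (d 1),
      add_right_comm _ (x 2) (x 1), add_right_comm _ (d 2) (d 1)]
    ring

theorem numer_eq_zero {A : Type*} [CommRing A] [IsDomain A] [CharZero A] {x : Fin 3 → A}
    {i j : Fin 3} (hij : i ≠ j) (hx : x i = x j) (δ : ℕ) : numer x δ = 0 := by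
  have hxs : x ∘ Equiv.swap i j = x := by
    rw [Equiv.comp_swap_eq_update, hx, Function.update_eq_self, ← hx, Function.update_eq_self]
  refine self_eq_neg.mp ?_
  conv_lhs => rw [numer]
  rw [numer, ← Finset.sum_neg_distrib]
  refine Finset.sum_nbij' (fun d => d ∘ Equiv.swap i j) (fun d => d ∘ Equiv.swap i j)
    ?_ ?_ ?_ ?_ ?_
  iterate 2
    intro d hd
    rw [mem_simplex, ← Fin.sum_univ_three] at hd ⊢
    exact (Equiv.sum_comp (Equiv.swap i j) d).trans hd
  iterate 2
    exact fun d _ => funext fun k => by simp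
  intro d _
  rw [eq_neg_iff_add_eq_zero, add_comm, ← eq_neg_iff_add_eq_zero,
    ← twist_mul_codenom_comp_swap x δ d hij, hxs]

/-- The substitution of `X j` for `X i`. -/
def identify (i j : Fin 3) : MvPolynomial (Fin 3) ℚ →ₐ[ℚ] MvPolynomial (Fin 3) ℚ :=
  MvPolynomial.aeval (Function.update MvPolynomial.X i (MvPolynomial.X j))

theorem identify_X (i j k : Fin 3) :
    identify i j (MvPolynomial.X k) = if k = i then MvPolynomial.X j else MvPolynomial.X k := by
  rw [identify, MvPolynomial.aeval_X, Function.update_apply]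

theorem X_sub_X_dvd_of_identify_eq_zero {i j : Fin 3} {p : MvPolynomial (Fin 3) ℚ}
    (h : identify i j p = 0) : MvPolynomial.X i - MvPolynomial.X j ∣ p := by
  let π := Ideal.Quotient.mkₐ ℚ
    (Ideal.span {(MvPolynomial.X i - MvPolynomial.X j : MvPolynomial (Fin 3) ℚ)})
  have hπ : π.comp (identify i j) = π := by
    refine MvPolynomial.algHom_ext fun k => ?_
    rw [AlgHom.comp_apply, identify_X]
    split_ifs with hk
    · rw [hk]
      exact (Ideal.Quotient.eq.mpr (Ideal.mem_span_singleton_self _)).symm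
    · rfl
  rw [← Ideal.mem_span_singleton, ← Ideal.Quotient.eq_zero_iff_mem]
  have h₁ := DFunLike.congr_fun hπ p
  rw [AlgHom.comp_apply, h, map_zero] at h₁
  exact h₁.symm

theorem X_sub_X_ne_zero {i j : Fin 3} (hij : i ≠ j) :
    (MvPolynomial.X i - MvPolynomial.X j : MvPolynomial (Fin 3) ℚ) ≠ 0 :=
  sub_ne_zero.mpr fun h => hij (MvPolynomial.X_injective h)

theorem vdm_dvd_numer (δ : ℕ) :
    vdm (MvPolynomial.X 0) (MvPolynomial.X 1) (MvPolynomial.X 2) ∣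
      numer (MvPolynomial.X : Fin 3 → MvPolynomial (Fin 3) ℚ) δ := by
  have hN : ∀ i j : Fin 3, i ≠ j →
      identify i j (numer (MvPolynomial.X : Fin 3 → MvPolynomial (Fin 3) ℚ) δ) = 0 := by
    intro i j hij
    refine (map_numer (identify i j).toRingHom _ δ).trans (numer_eq_zero hij ?_ δ)
    simp [identify_X]
  obtain ⟨p, hp⟩ := X_sub_X_dvd_of_identify_eq_zero (hN 0 1 (by decide))
  have h₂ := hN 0 2 (by decide)
  rw [hp, map_mul, mul_eq_zero, or_iff_right (by
    simpa [identify_X] using X_sub_X_ne_zero (i := 2) (j := 1) (by decide))] at h₂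
  obtain ⟨q, hq⟩ := X_sub_X_dvd_of_identify_eq_zero h₂
  have h₃ := hN 1 2 (by decide)
  rw [hp, hq, map_mul, map_mul, mul_eq_zero, mul_eq_zero, or_iff_right (by
    simpa [identify_X] using X_sub_X_ne_zero (i := 0) (j := 2) (by decide)), or_iff_right (by
    simpa [identify_X] using X_sub_X_ne_zero (i := 0) (j := 2) (by decide))] at h₃
  obtain ⟨r, hr⟩ := X_sub_X_dvd_of_identify_eq_zero h₃
  exact ⟨r, by rw [hp, hq, hr, vdm]; ring⟩

theorem Vand_dvd_F (δ : ℕ) : Vand ∣ F δ := by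
  have h := map_dvd (MvPolynomial.coeToMvPowerSeries.ringHom (σ := Fin 3) (R := ℚ))
    (vdm_dvd_numer δ)
  rw [map_numer] at h
  simp only [vdm, map_mul, map_sub, MvPolynomial.coeToMvPowerSeries.ringHom_apply,
    MvPolynomial.coe_X] at h
  rw [F_eq, Vand_eq, vdm]
  exact h.mul_right _

/-! ### The differential equation -/

theorem coeff_th (f : PowerSeries ℚ) (k : ℕ) :
    PowerSeries.coeff k (th f) = k * PowerSeries.coeff k f :=
  PowerSeries.coeff_mk _ _

theorem eq_of_eq_mom₀ {a : ℕ → ℚ} (h : ∀ k, a k = -1 / 20 * mom₀ k) :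
    a 0 = 1 ∧ a 1 = 5 ∧ a 2 = 69 ∧ a 3 = 1427 ∧ a 4 = 35749 := by
  simp only [h, moments_zero, moments_one, moments_two, moments_three, moments_four]
  norm_num

/-- every `F_δ` is divisible by the Vandermonde `Δ`, and the series
`I₀ = Σ a_δ q^δ` with `a_δ = (F_δ/Δ)(0)` is annihilated by the stated
Picard–Fuchs operator. -/
theorem stmt_11 :
    (∀ δ : ℕ, ∃ G : R, F δ = Vand * G) ∧
    (∀ G : ℕ → R, (∀ δ : ℕ, F δ = Vand * G δ) →
      ∀ I₀ : PowerSeries ℚ,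
        I₀ = PowerSeries.mk (fun δ => MvPowerSeries.constantCoeff (G δ)) →
        3721 * th^[4] I₀ - 61 * PowerSeries.X * (3029 * th^[4] I₀ + 5572 * th^[3] I₀ + 4677 * th^[2] I₀ + 1891 * th I₀ + 305 * I₀) + PowerSeries.X ^ 2 * (1215215 * th^[4] I₀ + 3428132 * th^[3] I₀ + 4267228 * th^[2] I₀ + 2572675 * th I₀ + 611586 * I₀) - 81 * PowerSeries.X ^ 3 * (39370 * th^[4] I₀ + 140178 * th^[3] I₀ + 206807 * th^[2] I₀ + 142191 * th I₀ + 37332 * I₀) + 6561 * PowerSeries.X ^ 4 * (566 * th^[4] I₀ + 2230 * th^[3] I₀ + 3356 * th^[2] I₀ + 2241 * th I₀ + 558 * I₀) - 1594323 * PowerSeries.X ^ 5 * ((fun g => th g + g) ((fun g => th g + g) ((fun g => th g + g) ((fun g => th g + g) (I₀))))) = 0) := by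
  refine ⟨Vand_dvd_F, fun G hG I₀ hI => ?_⟩
  have ha : ∀ k, PowerSeries.coeff k I₀ = -1 / 20 * mom₀ k := fun k => by
    rw [hI, PowerSeries.coeff_mk, constantCoeff_eq_mom₀ (hG k)]
  have hnum : ∀ (c : ℕ) [c.AtLeastTwo],
      (OfNat.ofNat c : PowerSeries ℚ) = PowerSeries.C (OfNat.ofNat c : ℚ) := fun c _ =>
    (map_ofNat PowerSeries.C c).symm
  ext N
  rw [← pow_one (PowerSeries.X : PowerSeries ℚ)]
  simp only [← pow_mul, one_mul]
  simp only [hnum, mul_assoc, map_add, map_sub, map_zero, PowerSeries.coeff_C_mul,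
    PowerSeries.coeff_X_pow_mul', Function.iterate_succ_apply, Function.iterate_zero_apply,
    coeff_th]
  rcases lt_or_ge N 5 with hN | hN
  · obtain ⟨h0, h1, h2, h3, h4⟩ := eq_of_eq_mom₀ ha
    interval_cases N <;> norm_num [h0, h1, h2, h3, h4]
  · obtain ⟨a, rfl⟩ := Nat.exists_eq_add_of_le' hN
    have h := mom₀_recurrence a rfl
    simp only [symb₀, symb₁, symb₂, symb₃, symb₄, symb₅] at h
    simp only [ha]
    simp only [show 5 ≤ a + 5 by omega, show 4 ≤ a + 5 by omega, show 3 ≤ a + 5 by omega,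
      show 2 ≤ a + 5 by omega, show 1 ≤ a + 5 by omega, if_true, Nat.add_sub_cancel,
      show a + 5 - 4 = a + 1 by omega, show a + 5 - 3 = a + 2 by omega,
      show a + 5 - 2 = a + 3 by omega, show a + 5 - 1 = a + 4 by omega]
    push_cast
    linear_combination -1 / 20 * h

end Stmt11
end
end
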